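/- arXiv:2401.06646 — 6 statements merged into one kernel-verified Lean document; each statement's English description precedes it below -/
import Mathlib

section
/- Let f̃ : ℝ → ℝ be a convex function, let ω, x, y ∈ ℝ^r, and let α ∈ ℝ^r satisfy αᵢ > 0 for all i and ∑_{i=1}^r αᵢ = 1. Then ∑_{i=1}^r αᵢ · f̃( (ωᵢ/αᵢ)·(xᵢ − yᵢ) + ωᵀy ) ≥ f̃(ωᵀx), where ωᵀx = ∑_{i=1}^r ωᵢ xᵢ. -/
theorem sum_smul_div_smul_add {𝕜 E ι : Type*} [Field 𝕜] [AddCommMonoid E] [Module 𝕜 E]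
    {t : Finset ι} {α : ι → 𝕜} (hα : ∀ i ∈ t, α i ≠ 0) (hsum : ∑ i ∈ t, α i = 1)
    (ω : ι → 𝕜) (u : ι → E) (z : E) :
    ∑ i ∈ t, α i • ((ω i / α i) • u i + z) = ∑ i ∈ t, ω i • u i + z := by
  have cancel_weight : ∀ i ∈ t, α i • ((ω i / α i) • u i + z) = ω i • u i + α i • z :=
    fun i hi ↦ by rw [smul_add, smul_smul, mul_div_cancel₀ _ (hα i hi)]
  rw [Finset.sum_congr rfl cancel_weight, Finset.sum_add_distrib, ← Finset.sum_smul, hsum,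
    one_smul]

theorem jensen_majorizer_inequality_general {𝕜 E β ι : Type*}
    [Field 𝕜] [LinearOrder 𝕜] [IsStrictOrderedRing 𝕜] [AddCommGroup E] [Module 𝕜 E]
    [AddCommGroup β] [PartialOrder β] [IsOrderedAddMonoid β] [Module 𝕜 β]
    [IsStrictOrderedModule 𝕜 β]
    {s : Set E} {f : E → β} (hf : ConvexOn 𝕜 s f)
    {t : Finset ι} {α : ι → 𝕜} (hα : ∀ i ∈ t, 0 < α i) (hsum : ∑ i ∈ t, α i = 1)
    (ω : ι → 𝕜) (x y : ι → E)
    (hmem : ∀ i ∈ t, (ω i / α i) • (x i - y i) + ∑ j ∈ t, ω j • y j ∈ s) :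
    f (∑ i ∈ t, ω i • x i) ≤
      ∑ i ∈ t, α i • f ((ω i / α i) • (x i - y i) + ∑ j ∈ t, ω j • y j) := by
  have weighted_average :
      ∑ i ∈ t, α i • ((ω i / α i) • (x i - y i) + ∑ j ∈ t, ω j • y j) = ∑ i ∈ t, ω i • x i := by
    rw [sum_smul_div_smul_add (fun i hi ↦ (hα i hi).ne') hsum, ← Finset.sum_add_distrib]
    simp only [smul_sub, sub_add_cancel]
  rw [← weighted_average]
  exact hf.map_sum_le (fun i hi ↦ (hα i hi).le) hsum hmem

open Finset in
/-- Jensen-majorizer inequality for a convex function of a linear form. -/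
theorem jensen_majorizer_inequality
    {r : ℕ} (ftilde : ℝ → ℝ) (hconv : ConvexOn ℝ Set.univ ftilde)
    (ω x y α : Fin r → ℝ) (hα : ∀ i, 0 < α i) (hsum : ∑ i, α i = 1) :
    ftilde (∑ i, ω i * x i) ≤
      ∑ i, α i * ftilde (ω i / α i * (x i - y i) + ∑ j, ω j * y j) :=
  jensen_majorizer_inequality_general hconv (fun i _ ↦ hα i) hsum ω x y fun _ _ ↦ Set.mem_univ _
end

section
/- Let v ∈ ℝ^m with vᵢ > 0 for all i, let W be an m×r real matrix with W_{ik} ≥ 0 for all i,k, and let h, h̃ ∈ ℝ^r with h_k > 0 and h̃_k > 0 for all k. Assume ṽᵢ := (Wh̃)ᵢ > 0 and (Wh)ᵢ > 0 for all i. Define d₁(x,y) = x·log(x/y) − x + y for x,y > 0, D_{KL}(v,Wh) = ∑_{i=1}^m d₁(vᵢ, (Wh)ᵢ), and the Jensen majorizer g(h,h̃) = ∑_{i=1}^m ∑_{k=1}^r (W_{ik}·h̃_k/ṽᵢ)·d₁(vᵢ, ṽᵢ·h_k/h̃_k). Then g(h,h̃) ≥ D_{KL}(v,Wh), and g(h̃,h̃)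 = D_{KL}(v,Wh̃). -/
/-!
For each row `i` the weights `W i k * htilde k / (W *ᵥ htilde) i` sum to one, and averaging the
points `(W *ᵥ htilde) i * h k / htilde k` against them gives `(W *ᵥ h) i`. The majorization is
therefore Jensen's inequality, applied row by row to the convex function `d₁ (v i)`. When
`h = htilde` all the points of a row coincide, so Jensen's inequality becomes an equality.
-/

open Set Matrix

section Jensen

variable {𝕜 : Type*} [Field 𝕜]

lemma sum_mul_div_sum_mul_eq_one {ι : Type*} {t : Finset ι} {w y : ι → 𝕜}
    (hT : ∑ j ∈ t, w j * y j ≠ 0) :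
    ∑ k ∈ t, w k * y k / ∑ j ∈ t, w j * y j = 1 := by
  rw [← Finset.sum_div, div_self hT]

variable [LinearOrder 𝕜] [IsStrictOrderedRing 𝕜]

lemma map_sum_smul_le_sum_div_smul_of_convexOn
    {ι E β : Type*} [AddCommGroup E] [Module 𝕜 E]
    [AddCommGroup β] [PartialOrder β] [IsOrderedAddMonoid β]
    [Module 𝕜 β] [IsStrictOrderedModule 𝕜 β]
    {s : Set E} {f : E → β} (hf : ConvexOn 𝕜 s f) {t : Finset ι} {w y : ι → 𝕜} {x : ι → E}
    (hw : ∀ k ∈ t, 0 ≤ w k) (hy : ∀ k ∈ t, 0 < y k) (hT : 0 < ∑ j ∈ t, w j * y j)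
    (hx : ∀ k ∈ t, ((∑ j ∈ t, w j * y j) / y k) • x k ∈ s) :
    f (∑ k ∈ t, w k • x k) ≤
      ∑ k ∈ t, (w k * y k / ∑ j ∈ t, w j * y j) • f (((∑ j ∈ t, w j * y j) / y k) • x k) := by
  have barycenter : ∑ k ∈ t, w k • x k =
      ∑ k ∈ t, (w k * y k / ∑ j ∈ t, w j * y j) • ((∑ j ∈ t, w j * y j) / y k) • x k := by
    refine Finset.sum_congr rfl fun k hk ↦ ?_
    rw [smul_smul, div_mul_div_cancel₀ hT.ne', mul_div_cancel_right₀ _ (hy k hk).ne']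
  rw [barycenter]
  exact hf.map_sum_le (fun k hk ↦ div_nonneg (mul_nonneg (hw k hk) (hy k hk).le) hT.le)
    (sum_mul_div_sum_mul_eq_one hT.ne') hx

end Jensen

section Majorizer

variable {𝕜 m n : Type*} [Field 𝕜] [Fintype m] [Fintype n]

/-- The Jensen majorizer `g(h, h̃)` of the separable objective `h ↦ ∑ i, d i ((W *ᵥ h) i)`, anchored
at `h̃ = htilde`. The data vector is absorbed into `d`: for KL-NMF, `d i = d₁ (v i)`. -/
def jensenMajorizer (d : m → 𝕜 → 𝕜) (W : Matrix m n 𝕜) (h htilde : n → 𝕜) : 𝕜 :=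
  ∑ i, ∑ k, (W i k * htilde k / (W *ᵥ htilde) i) * d i ((W *ᵥ htilde) i * h k / htilde k)

lemma jensenMajorizer_self (d : m → 𝕜 → 𝕜) {W : Matrix m n 𝕜} {h : n → 𝕜}
    (hh : ∀ k, h k ≠ 0) (hWh : ∀ i, (W *ᵥ h) i ≠ 0) :
    jensenMajorizer d W h h = ∑ i, d i ((W *ᵥ h) i) := by
  refine Finset.sum_congr rfl fun i _ ↦ ?_
  have weights_sum : ∑ k, W i k * h k / (W *ᵥ h) i = 1 := sum_mul_div_sum_mul_eq_one (hWh i)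
  simp only [mul_div_cancel_right₀ _ (hh _)]
  rw [← Finset.sum_mul, weights_sum, one_mul]

variable [LinearOrder 𝕜] [IsStrictOrderedRing 𝕜]

lemma sum_mulVec_le_jensenMajorizer {d : m → 𝕜 → 𝕜} (hd : ∀ i, ConvexOn 𝕜 (Ioi 0) (d i))
    {W : Matrix m n 𝕜} (hW : ∀ i k, 0 ≤ W i k) {h htilde : n → 𝕜}
    (hh : ∀ k, 0 < h k) (hhtilde : ∀ k, 0 < htilde k) (hvt : ∀ i, 0 < (W *ᵥ htilde) i) :
    ∑ i, d i ((W *ᵥ h) i) ≤ jensenMajorizer d W h htilde := by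
  refine Finset.sum_le_sum fun i _ ↦ ?_
  have row_jensen := map_sum_smul_le_sum_div_smul_of_convexOn (hd i) (fun k _ ↦ hW i k)
    (fun k _ ↦ hhtilde k) (hvt i) fun k _ ↦ mul_pos (div_pos (hvt i) (hhtilde k)) (hh k)
  simpa only [smul_eq_mul, div_mul_eq_mul_div] using! row_jensen

theorem kl_jensen_majorizer_general {d : m → 𝕜 → 𝕜} (hd : ∀ i, ConvexOn 𝕜 (Ioi 0) (d i))
    {W : Matrix m n 𝕜} (hW : ∀ i k, 0 ≤ W i k) {h htilde : n → 𝕜}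
    (hh : ∀ k, 0 < h k) (hhtilde : ∀ k, 0 < htilde k) (hvt : ∀ i, 0 < (W *ᵥ htilde) i) :
    ∑ i, d i ((W *ᵥ h) i) ≤ jensenMajorizer d W h htilde ∧
      jensenMajorizer d W htilde htilde = ∑ i, d i ((W *ᵥ htilde) i) :=
  ⟨sum_mulVec_le_jensenMajorizer hd hW hh hhtilde hvt,
    jensenMajorizer_self d (fun k ↦ (hhtilde k).ne') fun i ↦ (hvt i).ne'⟩

end Majorizer

lemma convexOn_mul_log_div_sub_add {x : ℝ} (hx : 0 ≤ x) :
    ConvexOn ℝ (Ioi 0) fun y ↦ x * Real.log (x / y) - x + y := by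
  have convex_expanded :
      ConvexOn ℝ (Ioi 0) fun y ↦ x * -Real.log y + y + (x * Real.log x - x) :=
    ((strictConcaveOn_log_Ioi.concaveOn.neg.smul hx).add
      (convexOn_id (convex_Ioi 0))).add_const (x * Real.log x - x)
  refine convex_expanded.congr fun y (hy : 0 < y) ↦ ?_
  rcases hx.eq_or_lt with rfl | hx
  · simp
  · rw [Real.log_div hx.ne' hy.ne']
    ring

open Finset in
/-- The Jensen majorizer for KL-NMF majorizes the KL divergence and is tight at the
anchor point (β = 1 case of the Févotte–Idier majorizer). -/
theorem kl_jensen_majorizer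
    {m r : ℕ} (v : Fin m → ℝ) (hv : ∀ i, 0 < v i)
    (W : Matrix (Fin m) (Fin r) ℝ) (hW : ∀ i k, 0 ≤ W i k)
    (h htilde : Fin r → ℝ) (hh : ∀ k, 0 < h k) (hhtilde : ∀ k, 0 < htilde k)
    (hvt : ∀ i, 0 < W.mulVec htilde i) (hvh : ∀ i, 0 < W.mulVec h i)
    (d₁ : ℝ → ℝ → ℝ) (hd₁ : ∀ x y, d₁ x y = x * Real.log (x / y) - x + y) :
    (∑ i, d₁ (v i) (W.mulVec h i) ≤
        ∑ i, ∑ k, (W i k * htilde k / W.mulVec htilde i) *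
          d₁ (v i) (W.mulVec htilde i * h k / htilde k)) ∧
    (∑ i, ∑ k, (W i k * htilde k / W.mulVec htilde i) *
          d₁ (v i) (W.mulVec htilde i * htilde k / htilde k)
        = ∑ i, d₁ (v i) (W.mulVec htilde i)) := by
  have hd (i : Fin m) : ConvexOn ℝ (Ioi 0) (d₁ (v i)) :=
    (convexOn_mul_log_div_sub_add (hv i).le).congr fun y _ ↦ (hd₁ (v i) y).symm
  exact kl_jensen_majorizer_general hd hW hh hhtilde hvt
end

section
/- Let v ∈ ℝ^m with vᵢ > 0, let W be an m×r real matrix with W_{ik} ≥ 0, and let h̃ ∈ ℝ^r with h̃_k > 0 for all k and ṽᵢ := (Wh̃)ᵢ > 0 for all i. Fix k ∈ {1,…,r} and define φ(x) = ∑_{i=1}^m (W_{ik}·h̃_k/ṽᵢ)·d₁(vᵢ, ṽᵢ·x/h̃_k) for x > 0, where d₁(a,b) = a·log(a/b) − a + b. Then φ is differentiable at h̃_k and φ′(h̃_k) = ∑_{i=1}^m W_{ik}·(1 − vᵢ/ṽᵢ), which equals the partial derivative with respect to h_k of h ↦ ∑_{i=1}^m d₁(vᵢ, (Wh)ᵢ)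 evaluated at h = h̃. -/
/-! As a function of its second argument, `d₁ a` is `y - a * log y` up to a constant, so its
derivative at `y` is `1 - a / y`. In the `i`-th summand of the objective the chain rule multiplies
this by `W i k`. In the `i`-th summand of the majorizer the inner slope is `ṽ i / h̃ k`, which the
Jensen weight `W i k * h̃ k / ṽ i` turns into `W i k` as well; at the anchor both inner arguments
equal `ṽ i`. -/

/-- The scalar Kullback–Leibler divergence `d₁(x, y) = x log (x / y) - x + y`, meant for `0 ≤ x` and
`0 < y`; at `x = 0` it takes the customary value `y`. -/
noncomputable def scalarKL (x y : ℝ) : ℝ := x * Real.log (x / y) - x + y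

theorem scalarKL_eq_sub_mul_log_add (x : ℝ) {y : ℝ} (hy : y ≠ 0) :
    scalarKL x y = y - x * Real.log y + (x * Real.log x - x) := by
  obtain rfl | hx := eq_or_ne x 0
  · simp [scalarKL]
  · rw [scalarKL, Real.log_div hx hy]
    ring

theorem hasDerivAt_scalarKL (x : ℝ) {y : ℝ} (hy : y ≠ 0) :
    HasDerivAt (scalarKL x) (1 - x / y) y := by
  have h : HasDerivAt (fun t => t - x * Real.log t + (x * Real.log x - x)) (1 - x / y) y :=
    ((hasDerivAt_id' y).sub ((Real.hasDerivAt_log hy).const_mul x)).add_const _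
  refine h.congr_of_eventuallyEq ?_
  filter_upwards [eventually_ne_nhds hy] with t ht using scalarKL_eq_sub_mul_log_add x ht

section Majorizer

open scoped Matrix

theorem hasDerivAt_mulVec_update {𝕜 ι κ : Type*} [NontriviallyNormedField 𝕜] [Fintype κ]
    [DecidableEq κ] (W : Matrix ι κ 𝕜) (h : κ → 𝕜) (i : ι) (k : κ) (x : 𝕜) :
    HasDerivAt (fun t => (W *ᵥ Function.update h k t) i) (W i k) x := by
  have hsum : HasDerivAt (fun t => ∑ j, W i j * Function.update h k t j)
      (∑ j, W i j * (Pi.single k 1 : κ → 𝕜) j) x :=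
    .fun_sum fun j _ => (hasDerivAt_pi.1 (hasDerivAt_update h k x) j).const_mul (W i j)
  exact hsum.congr_deriv (by simp [Pi.single_apply])

variable {ι κ : Type*} [Fintype ι] [Fintype κ] (v : ι → ℝ) (W : Matrix ι κ ℝ) (h : κ → ℝ) (k : κ)

/-- The KL-NMF objective `h ↦ ∑ᵢ d₁(vᵢ, (W h)ᵢ)` for a single data column `v`. -/
noncomputable def klObjective : ℝ := ∑ i, scalarKL (v i) ((W *ᵥ h) i)

/-- The `k`-th coordinate function of the Jensen majorizer anchored at `h`. The majorizer is
separable: its value at `g` is the sum over `k` of `klJensenCoord v W h k (g k)`. -/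
noncomputable def klJensenCoord (x : ℝ) : ℝ :=
  ∑ i, W i k * h k / (W *ᵥ h) i * scalarKL (v i) ((W *ᵥ h) i * x / h k)

variable {W h k}

theorem hasDerivAt_klObjective_update [DecidableEq κ] {x : ℝ}
    (hWx : ∀ i, (W *ᵥ Function.update h k x) i ≠ 0) :
    HasDerivAt (fun t => klObjective v W (Function.update h k t))
      (∑ i, W i k * (1 - v i / (W *ᵥ Function.update h k x) i)) x := by
  refine .fun_sum fun i _ => ?_
  rw [mul_comm]
  exact (hasDerivAt_scalarKL (v i) (hWx i)).comp x (hasDerivAt_mulVec_update W h i k x)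

theorem hasDerivAt_klJensenCoord {x : ℝ} (hWh : ∀ i, (W *ᵥ h) i ≠ 0) (hk : h k ≠ 0) (hx : x ≠ 0) :
    HasDerivAt (klJensenCoord v W h k)
      (∑ i, W i k * (1 - v i / ((W *ᵥ h) i * x / h k))) x := by
  refine .fun_sum fun i _ => ?_
  have inner : HasDerivAt (fun t => (W *ᵥ h) i * t / h k) ((W *ᵥ h) i / h k) x := by
    simpa using ((hasDerivAt_id' x).const_mul ((W *ᵥ h) i)).div_const (h k)
  have outer := hasDerivAt_scalarKL (v i) (div_ne_zero (mul_ne_zero (hWh i) hx) hk)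
  have weight_mul_slope : W i k * h k / (W *ᵥ h) i * ((W *ᵥ h) i / h k) = W i k := by
    field_simp [hWh i]
  refine ((outer.comp x inner).const_mul (W i k * h k / (W *ᵥ h) i)).congr_deriv ?_
  rw [mul_left_comm, weight_mul_slope, mul_comm]

theorem kl_jensen_majorizer_gradient_tangency_general [DecidableEq κ] (_hv : ∀ i, 0 ≤ v i)
    (hWh : ∀ i, 0 < (W *ᵥ h) i) (hk : h k ≠ 0) :
    HasDerivAt (klJensenCoord v W h k) (∑ i, W i k * (1 - v i / (W *ᵥ h) i)) (h k) ∧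
      HasDerivAt (fun x => klObjective v W (Function.update h k x))
        (∑ i, W i k * (1 - v i / (W *ᵥ h) i)) (h k) := by
  have hWh₀ : ∀ i, (W *ᵥ h) i ≠ 0 := fun i => (hWh i).ne'
  constructor
  · simpa only [mul_div_cancel_right₀ _ hk] using hasDerivAt_klJensenCoord v hWh₀ hk hk
  · have hupdate : ∀ i, (W *ᵥ Function.update h k (h k)) i ≠ 0 := by
      simpa only [Function.update_eq_self] using hWh₀
    simpa only [Function.update_eq_self] using hasDerivAt_klObjective_update v hupdate

end Majorizer

open Finset in
/-- Tangency of gradients at the anchor point for the Jensen KL majorizer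
(condition (c) of the definition of a majorizer). -/
theorem kl_jensen_majorizer_gradient_tangency
    {m r : ℕ} (v : Fin m → ℝ) (hv : ∀ i, 0 < v i)
    (W : Matrix (Fin m) (Fin r) ℝ) (hW : ∀ i k, 0 ≤ W i k)
    (htilde : Fin r → ℝ) (hhtilde : ∀ k, 0 < htilde k)
    (hvt : ∀ i, 0 < W.mulVec htilde i)
    (d₁ : ℝ → ℝ → ℝ) (hd₁ : ∀ a b, d₁ a b = a * Real.log (a / b) - a + b)
    (k : Fin r) :
    HasDerivAt
      (fun x : ℝ => ∑ i, (W i k * htilde k / W.mulVec htilde i) *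
        d₁ (v i) (W.mulVec htilde i * x / htilde k))
      (∑ i, W i k * (1 - v i / W.mulVec htilde i)) (htilde k) ∧
    HasDerivAt
      (fun x : ℝ => ∑ i, d₁ (v i) (W.mulVec (Function.update htilde k x) i))
      (∑ i, W i k * (1 - v i / W.mulVec htilde i)) (htilde k) := by
  obtain rfl : d₁ = scalarKL := funext₂ hd₁
  exact kl_jensen_majorizer_gradient_tangency_general v (fun i => (hv i).le) hvt (hhtilde k).ne'
end

section
/- Let ε > 0, let v ∈ ℝ^m with vᵢ > 0, let W be an m×r real matrix with W_{ik} > 0 for all i,k, and let h̃ ∈ ℝ^r with h̃_k ≥ ε for all k. Define the multiplicative update h⁺ ∈ ℝ^r by h⁺_k = max( ε , h̃_k · (∑_{i=1}^m W_{ik}·vᵢ/(Wh̃)ᵢ) / (∑_{i=1}^m W_{ik}) ). Then D_{KL}(v, Wh⁺) ≤ D_{KL}(v, Wh̃), where D_{KL}(v,u) = ∑_{i=1}^m ( vᵢ·log(vᵢ/uᵢ) − vᵢ + uᵢ ). -/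
/-!
The divergence `D(v, W h)` is convex in `h`, and Jensen's inequality with weights
`Wᵢₖ gₖ / (W g)ᵢ` majorizes it by a function `G(h)` that agrees with it at the current iterate
`h = g`. This majorizer is separable: up to a constant it is `∑ₖ (∑ᵢ Wᵢₖ) d(cₖ, hₖ)`, where `cₖ` is
the unconstrained update. Since `d(c, ·)` decreases before `c` and increases after it, `max ε cₖ` is
optimal among `hₖ ≥ ε`, so the update `g⁺` satisfies
`D(v, W g⁺) ≤ G(g⁺) ≤ G(g) = D(v, W g)`.
-/

section ScalarDivergence

/-- The generalized Kullback–Leibler divergence `d(a, b)` of two scalars, meant for `0 ≤ a` and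
`0 < b`; at `a = 0` the value of `Real.log` is irrelevant and `d(0, b) = b`. -/
noncomputable def klScalar (a b : ℝ) : ℝ :=
  a * Real.log (a / b) - a + b

theorem klScalar_eq_sub_mul_log_add (a : ℝ) {b : ℝ} (hb : b ≠ 0) :
    klScalar a b = b - a * Real.log b + (a * Real.log a - a) := by
  rcases eq_or_ne a 0 with rfl | ha
  · simp [klScalar]
  · rw [klScalar, Real.log_div ha hb]
    ring

theorem klScalar_sub_klScalar (a : ℝ) {b c : ℝ} (hb : b ≠ 0) (hc : c ≠ 0) :
    klScalar a b - klScalar a c = b - c - a * Real.log (b / c) := by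
  rw [klScalar_eq_sub_mul_log_add a hb, klScalar_eq_sub_mul_log_add a hc, Real.log_div hb hc]
  ring

theorem convexOn_klScalar {a : ℝ} (ha : 0 ≤ a) : ConvexOn ℝ (Set.Ioi 0) (klScalar a) := by
  have hlog : ConcaveOn ℝ (Set.Ioi 0) fun b => a * Real.log b :=
    strictConcaveOn_log_Ioi.concaveOn.smul ha
  have hsub : ConvexOn ℝ (Set.Ioi 0) fun b => b - a * Real.log b :=
    (convexOn_id (convex_Ioi 0)).sub hlog
  exact (hsub.add_const (a * Real.log a - a)).congr fun b hb =>
    (klScalar_eq_sub_mul_log_add a (ne_of_gt hb)).symm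

theorem klScalar_max_le {ε c x : ℝ} (hε : 0 < ε) (hc : 0 ≤ c) (hx : ε ≤ x) :
    klScalar c (max ε c) ≤ klScalar c x := by
  set p := max ε c
  have hp : 0 < p := lt_max_of_lt_left hε
  have hx₀ : 0 < x := hε.trans_le hx
  have hlog : c * Real.log (x / p) ≤ c * (x / p - 1) :=
    mul_le_mul_of_nonneg_left (Real.log_le_sub_one_of_pos (div_pos hx₀ hp)) hc
  have hoptimal : 0 ≤ (x - p) * (p - c) := by
    rcases le_total c ε with h | h
    · rw [show p = ε from max_eq_left h]
      exact mul_nonneg (sub_nonneg.2 hx) (sub_nonneg.2 h)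
    · simp [show p = c from max_eq_right h]
  have hgap : 0 ≤ klScalar c x - klScalar c p :=
    calc
      0 ≤ (x - p) * (p - c) / p := div_nonneg hoptimal hp.le
      _ = x - p - c * (x / p - 1) := by field_simp
      _ ≤ x - p - c * Real.log (x / p) := sub_le_sub_left hlog _
      _ = klScalar c x - klScalar c p := (klScalar_sub_klScalar c hx₀.ne' hp.ne').symm
  exact sub_nonneg.1 hgap

end ScalarDivergence

section Majorization

variable {ι κ : Type*} [Fintype κ] {v : ι → ℝ} {W : Matrix ι κ ℝ} {g h : κ → ℝ}

theorem mulVec_apply_pos {i : ι} (hW : ∀ k, 0 ≤ W i k) (hrow : ∃ k, 0 < W i k)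
    (hh : ∀ k, 0 < h k) : 0 < W.mulVec h i := by
  obtain ⟨k, hk⟩ := hrow
  exact Finset.sum_pos' (fun j _ => mul_nonneg (hW j) (hh j).le)
    ⟨k, Finset.mem_univ k, mul_pos hk (hh k)⟩

/-- The proportion of `(W g)ᵢ` contributed by the `k`-th coordinate of `g`: the weights of the
convex combination to which Jensen's inequality is applied. -/
noncomputable def jensenWeight (W : Matrix ι κ ℝ) (g : κ → ℝ) (i : ι) (k : κ) : ℝ :=
  W i k * g k / W.mulVec g i

theorem sum_jensenWeight {i : ι} (hg : W.mulVec g i ≠ 0) : ∑ k, jensenWeight W g i k = 1 := by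
  simp only [jensenWeight, ← Finset.sum_div]
  exact div_self hg

theorem sum_jensenWeight_mul {i : ι} (hg : ∀ k, g k ≠ 0) (hWg : W.mulVec g i ≠ 0) :
    ∑ k, jensenWeight W g i k * (W.mulVec g i * h k / g k) = W.mulVec h i := by
  refine Finset.sum_congr rfl fun k _ => ?_
  have hgk := hg k
  rw [jensenWeight]
  field_simp

theorem klScalar_mulVec_le_sum {i : ι} (hv : 0 ≤ v i) (hW : ∀ k, 0 ≤ W i k)
    (hrow : ∃ k, 0 < W i k) (hg : ∀ k, 0 < g k) (hh : ∀ k, 0 < h k) :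
    klScalar (v i) (W.mulVec h i) ≤
      ∑ k, jensenWeight W g i k * klScalar (v i) (W.mulVec g i * h k / g k) := by
  have hWg : 0 < W.mulVec g i := mulVec_apply_pos hW hrow hg
  rw [← sum_jensenWeight_mul (h := h) (fun k => (hg k).ne') hWg.ne']
  exact (convexOn_klScalar hv).map_sum_le
    (fun k _ => div_nonneg (mul_nonneg (hW k) (hg k).le) hWg.le) (sum_jensenWeight hWg.ne')
    fun k _ => div_pos (mul_pos hWg (hh k)) (hg k)

variable [Fintype ι]

/-- The generalized Kullback–Leibler divergence `D(v, u)` of two vectors. -/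
noncomputable def klVector (v u : ι → ℝ) : ℝ :=
  ∑ i, klScalar (v i) (u i)

/-- The Jensen majorizer of `h ↦ D(v, W h)` at the base point `g`. -/
noncomputable def klMajorizer (v : ι → ℝ) (W : Matrix ι κ ℝ) (g h : κ → ℝ) : ℝ :=
  ∑ i, ∑ k, jensenWeight W g i k * klScalar (v i) (W.mulVec g i * h k / g k)

theorem klVector_mulVec_le_klMajorizer (hv : ∀ i, 0 ≤ v i) (hW : ∀ i k, 0 ≤ W i k)
    (hrow : ∀ i, ∃ k, 0 < W i k) (hg : ∀ k, 0 < g k) (hh : ∀ k, 0 < h k) :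
    klVector v (W.mulVec h) ≤ klMajorizer v W g h :=
  Finset.sum_le_sum fun i _ => klScalar_mulVec_le_sum (hv i) (hW i) (hrow i) hg hh

theorem klMajorizer_self (hg : ∀ k, g k ≠ 0) (hWg : ∀ i, W.mulVec g i ≠ 0) :
    klMajorizer v W g g = klVector v (W.mulVec g) := by
  refine Finset.sum_congr rfl fun i _ => ?_
  simp only [mul_div_cancel_right₀ _ (hg _), ← Finset.sum_mul]
  rw [sum_jensenWeight (hWg i), one_mul]

end Majorization

section MultiplicativeUpdate

variable {ι κ : Type*} [Fintype ι] [Fintype κ] {ε : ℝ} {v : ι → ℝ} {W : Matrix ι κ ℝ}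
  {g h : κ → ℝ}

/-- The multiplicative update of `g` without the lower bound `ε`. If the `k`-th column of `W`
vanishes, this is `0 / 0 = 0` at `k`, but then `D(v, W h)` does not depend on `h k`. -/
noncomputable def unconstrainedUpdate (v : ι → ℝ) (W : Matrix ι κ ℝ) (g : κ → ℝ) (k : κ) : ℝ :=
  g k * (∑ i, W i k * v i / W.mulVec g i) / ∑ i, W i k

/-- The multiplicative update of `g` over `{h | ε ≤ h}`. -/
noncomputable def multiplicativeUpdate (ε : ℝ) (v : ι → ℝ) (W : Matrix ι κ ℝ) (g : κ → ℝ)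
    (k : κ) : ℝ :=
  max ε (unconstrainedUpdate v W g k)

theorem multiplicativeUpdate_pos (hε : 0 < ε) (k : κ) : 0 < multiplicativeUpdate ε v W g k :=
  lt_max_of_lt_left hε

theorem unconstrainedUpdate_nonneg (hv : ∀ i, 0 ≤ v i) (hW : ∀ i k, 0 ≤ W i k)
    (hg : ∀ k, 0 ≤ g k) (k : κ) : 0 ≤ unconstrainedUpdate v W g k := by
  have hWg (i : ι) : 0 ≤ W.mulVec g i := Finset.sum_nonneg fun j _ => mul_nonneg (hW i j) (hg j)
  have hsum : 0 ≤ ∑ i, W i k * v i / W.mulVec g i :=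
    Finset.sum_nonneg fun i _ => div_nonneg (mul_nonneg (hW i k) (hv i)) (hWg i)
  exact div_nonneg (mul_nonneg (hg k) hsum) (Finset.sum_nonneg fun i _ => hW i k)

theorem sum_mul_unconstrainedUpdate (hW : ∀ i k, 0 ≤ W i k) (k : κ) :
    (∑ i, W i k) * unconstrainedUpdate v W g k = g k * ∑ i, W i k * v i / W.mulVec g i := by
  refine mul_div_cancel_of_imp' fun hcol => ?_
  have hzero (i : ι) : W i k = 0 :=
    (Finset.sum_eq_zero_iff_of_nonneg fun i _ => hW i k).1 hcol i (Finset.mem_univ i)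
  simp [hzero]

theorem klMajorizer_sub_klMajorizer {h' : κ → ℝ} (hW : ∀ i k, 0 ≤ W i k) (hg : ∀ k, g k ≠ 0)
    (hWg : ∀ i, W.mulVec g i ≠ 0) (hh : ∀ k, h k ≠ 0) (hh' : ∀ k, h' k ≠ 0) :
    klMajorizer v W g h - klMajorizer v W g h' =
      ∑ k, (∑ i, W i k) * (klScalar (unconstrainedUpdate v W g k) (h k) -
        klScalar (unconstrainedUpdate v W g k) (h' k)) := by
  have hterm (i : ι) (k : κ) :
      jensenWeight W g i k * klScalar (v i) (W.mulVec g i * h k / g k) -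
          jensenWeight W g i k * klScalar (v i) (W.mulVec g i * h' k / g k) =
        W i k * (h k - h' k) - g k * (W i k * v i / W.mulVec g i) * Real.log (h k / h' k) := by
    have hgk := hg k
    have hWgi := hWg i
    have hratio : W.mulVec g i * h k / g k / (W.mulVec g i * h' k / g k) = h k / h' k := by
      rw [div_div_div_cancel_right₀ hgk, mul_div_mul_left _ _ hWgi]
    rw [← mul_sub, klScalar_sub_klScalar _ (div_ne_zero (mul_ne_zero hWgi (hh k)) hgk)
      (div_ne_zero (mul_ne_zero hWgi (hh' k)) hgk), hratio, jensenWeight]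
    field_simp
  simp only [klMajorizer, ← Finset.sum_sub_distrib, hterm]
  rw [Finset.sum_comm]
  refine Finset.sum_congr rfl fun k _ => ?_
  rw [klScalar_sub_klScalar _ (hh k) (hh' k), mul_sub, ← mul_assoc,
    sum_mul_unconstrainedUpdate hW, Finset.sum_sub_distrib, ← Finset.sum_mul, ← Finset.sum_mul,
    ← Finset.mul_sum]

theorem klMajorizer_multiplicativeUpdate_le (hε : 0 < ε) (hv : ∀ i, 0 ≤ v i)
    (hW : ∀ i k, 0 ≤ W i k) (hrow : ∀ i, ∃ k, 0 < W i k) (hg : ∀ k, 0 < g k)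
    (hh : ∀ k, ε ≤ h k) :
    klMajorizer v W g (multiplicativeUpdate ε v W g) ≤ klMajorizer v W g h := by
  have hWg (i : ι) : W.mulVec g i ≠ 0 := (mulVec_apply_pos (hW i) (hrow i) hg).ne'
  rw [← sub_nonneg, klMajorizer_sub_klMajorizer hW (fun k => (hg k).ne') hWg
    (fun k => (hε.trans_le (hh k)).ne') fun k => (multiplicativeUpdate_pos hε k).ne']
  exact Finset.sum_nonneg fun k _ => mul_nonneg (Finset.sum_nonneg fun i _ => hW i k) <|
    sub_nonneg.2 <| klScalar_max_le hε
      (unconstrainedUpdate_nonneg hv hW (fun k => (hg k).le) k) (hh k)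

theorem mu_decreases_kl_objective_general (hε : 0 < ε) (hv : ∀ i, 0 ≤ v i)
    (hW : ∀ i k, 0 ≤ W i k) (hrow : ∀ i, ∃ k, 0 < W i k) (hh : ∀ k, ε ≤ h k) :
    klVector v (W.mulVec (multiplicativeUpdate ε v W h)) ≤ klVector v (W.mulVec h) := by
  have hpos (k : κ) : 0 < h k := hε.trans_le (hh k)
  calc
    klVector v (W.mulVec (multiplicativeUpdate ε v W h))
        ≤ klMajorizer v W h (multiplicativeUpdate ε v W h) :=
      klVector_mulVec_le_klMajorizer hv hW hrow hpos (multiplicativeUpdate_pos hε)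
    _ ≤ klMajorizer v W h h := klMajorizer_multiplicativeUpdate_le hε hv hW hrow hpos hh
    _ = klVector v (W.mulVec h) := klMajorizer_self (fun k => (hpos k).ne') fun i =>
      (mulVec_apply_pos (hW i) (hrow i) hpos).ne'

end MultiplicativeUpdate

open Finset in
/-- The multiplicative update for KL-NMF does not increase the KL objective. -/
theorem mu_decreases_kl_objective
    {m r : ℕ} (ε : ℝ) (hε : 0 < ε)
    (v : Fin m → ℝ) (hv : ∀ i, 0 < v i)
    (W : Matrix (Fin m) (Fin r) ℝ) (hW : ∀ i k, 0 < W i k)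
    (htilde : Fin r → ℝ) (hhtilde : ∀ k, ε ≤ htilde k)
    (hplus : Fin r → ℝ)
    (hhplus : ∀ k, hplus k =
      max ε (htilde k * (∑ i, W i k * v i / W.mulVec htilde i) / ∑ i, W i k)) :
    ∑ i, (v i * Real.log (v i / W.mulVec hplus i) - v i + W.mulVec hplus i) ≤
      ∑ i, (v i * Real.log (v i / W.mulVec htilde i) - v i + W.mulVec htilde i) := by
  cases isEmpty_or_nonempty (Fin r) with
  | inl _ => rw [Subsingleton.elim hplus htilde]
  | inr hr =>
    obtain rfl : hplus = multiplicativeUpdate ε v W htilde := funext hhplus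
    exact mu_decreases_kl_objective_general hε (fun i => (hv i).le) (fun i k => (hW i k).le)
      (fun i => hr.elim fun k => ⟨k, hW i k⟩) hhtilde
end

section
/- Let β ∈ [1,2], ε > 0, let X be an m×n real matrix with X_{ij} ≥ 0, let W be an m×r real matrix with W_{ik} ≥ ε, and let Ĥ be an r×n real matrix with Ĥ_{kj} ≥ ε. Then for every k ∈ {1,…,r} and j ∈ {1,…,n}, the multiplicative-update quantity H′_{kj} := Ĥ_{kj} · ( ∑_{i=1}^m W_{ik} · X_{ij} / ((WĤ)_{ij})^{2−β} ) / ( ∑_{i=1}^m W_{ik} · ((WĤ)_{ij})^{β−1} ) satisfies H′_{kj} ≤ (1/ε) · ∑_{i=1}^m X_{ij}. -/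
/-!
Write `V = W Ĥ`. Since `W i k * Ĥ k j ≤ V i j`, each summand of the numerator is at most
`X i j * V i j ^ (β - 1)`, while `ε ≤ W i k` bounds the denominator below by
`ε * ∑ i, V i j ^ (β - 1)`. Hence `ε` times the update is at most the average of the `X i j` with
weights `V i j ^ (β - 1)`, and a weighted average of nonnegative numbers is at most their sum.
-/

section OrderedSemiring

variable {R ι : Type*} [Semiring R] [PartialOrder R] [IsOrderedRing R]

theorem sum_mul_le_sum_mul_sum_of_nonneg {s : Finset ι} {f g : ι → R}
    (hf : ∀ i ∈ s, 0 ≤ f i) (hg : ∀ i ∈ s, 0 ≤ g i) :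
    ∑ i ∈ s, f i * g i ≤ (∑ i ∈ s, f i) * ∑ i ∈ s, g i := by
  rw [Finset.sum_mul]
  gcongr with i hi
  · exact hf i hi
  · exact Finset.single_le_sum hg hi

theorem mul_le_matrix_mul_apply {l o : Type*} [Fintype ι] {A : Matrix l ι R} {B : Matrix ι o R}
    {i : l} {j : o} (hA : ∀ k, 0 ≤ A i k) (hB : ∀ k, 0 ≤ B k j) (k : ι) :
    A i k * B k j ≤ (A * B) i j := by
  rw [Matrix.mul_apply]
  exact Finset.single_le_sum (f := fun k => A i k * B k j)
    (fun k _ => mul_nonneg (hA k) (hB k)) (Finset.mem_univ k)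

end OrderedSemiring

theorem div_rpow_le_rpow_of_add_eq_one {a v p q : ℝ} (hv : 0 < v) (hav : a ≤ v)
    (hpq : p + q = 1) : a / v ^ p ≤ v ^ q := by
  rw [div_le_iff₀ (Real.rpow_pos_of_pos hv p), ← Real.rpow_add hv, add_comm q p, hpq,
    Real.rpow_one]
  exact hav

theorem mul_sum_div_rpow_div_sum_le {ι : Type*} {s : Finset ι} {w v x : ι → ℝ} {ε h p q : ℝ}
    (hε : 0 < ε) (hw : ∀ i ∈ s, ε ≤ w i) (hv : ∀ i ∈ s, 0 < v i) (hx : ∀ i ∈ s, 0 ≤ x i)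
    (hwv : ∀ i ∈ s, w i * h ≤ v i) (hpq : p + q = 1) :
    h * (∑ i ∈ s, w i * x i / v i ^ p) / (∑ i ∈ s, w i * v i ^ q) ≤ 1 / ε * ∑ i ∈ s, x i := by
  have hvq : ∀ i ∈ s, 0 ≤ v i ^ q := fun i hi => Real.rpow_nonneg (hv i hi).le q
  have numerator_le : h * ∑ i ∈ s, w i * x i / v i ^ p ≤ ∑ i ∈ s, x i * v i ^ q := by
    rw [Finset.mul_sum]
    refine Finset.sum_le_sum fun i hi => ?_
    calc h * (w i * x i / v i ^ p) = x i * (w i * h / v i ^ p) := by ring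
      _ ≤ x i * v i ^ q := mul_le_mul_of_nonneg_left
          (div_rpow_le_rpow_of_add_eq_one (hv i hi) (hwv i hi) hpq) (hx i hi)
  have le_denominator : ε * ∑ i ∈ s, v i ^ q ≤ ∑ i ∈ s, w i * v i ^ q := by
    rw [Finset.mul_sum]
    exact Finset.sum_le_sum fun i hi => mul_le_mul_of_nonneg_right (hw i hi) (hvq i hi)
  have hx_sum : 0 ≤ ∑ i ∈ s, x i := Finset.sum_nonneg hx
  have hvq_sum : 0 ≤ ∑ i ∈ s, v i ^ q := Finset.sum_nonneg hvq
  refine div_le_of_le_mul₀ ((mul_nonneg hε.le hvq_sum).trans le_denominator) (by positivity) ?_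
  calc h * ∑ i ∈ s, w i * x i / v i ^ p
      ≤ ∑ i ∈ s, x i * v i ^ q := numerator_le
    _ ≤ (∑ i ∈ s, x i) * ∑ i ∈ s, v i ^ q := sum_mul_le_sum_mul_sum_of_nonneg hx hvq
    _ = 1 / ε * (∑ i ∈ s, x i) * (ε * ∑ i ∈ s, v i ^ q) := by field_simp
    _ ≤ 1 / ε * (∑ i ∈ s, x i) * ∑ i ∈ s, w i * v i ^ q := by gcongr

theorem mu_iterates_bounded_general {m n r : Type*} [Fintype m] [Fintype r] (β : ℝ) {ε : ℝ}
    (hε : 0 < ε) {X : Matrix m n ℝ} {W : Matrix m r ℝ} {Hhat : Matrix r n ℝ} {k : r} {j : n}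
    (hX : ∀ i, 0 ≤ X i j) (hW : ∀ i l, 0 ≤ W i l) (hWk : ∀ i, ε ≤ W i k)
    (hHhat : ∀ l, 0 ≤ Hhat l j) (hHhatk : 0 < Hhat k j) :
    Hhat k j * (∑ i, W i k * X i j / ((W * Hhat) i j) ^ (2 - β)) /
        (∑ i, W i k * ((W * Hhat) i j) ^ (β - 1)) ≤
      (1 / ε) * ∑ i, X i j := by
  have hle : ∀ i, W i k * Hhat k j ≤ (W * Hhat) i j := fun i =>
    mul_le_matrix_mul_apply (hW i) hHhat k
  have hpos : ∀ i, 0 < (W * Hhat) i j := fun i =>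
    (mul_pos (hε.trans_le (hWk i)) hHhatk).trans_le (hle i)
  exact mul_sum_div_rpow_div_sum_le hε (fun i _ => hWk i) (fun i _ => hpos i) (fun i _ => hX i)
    (fun i _ => hle i) (by ring)

open Finset in
/-- Boundedness of the multiplicative-update quantity for β-NMF, β ∈ [1,2]. -/
theorem mu_iterates_bounded
    {m n r : ℕ} (β ε : ℝ) (hβ1 : 1 ≤ β) (hβ2 : β ≤ 2) (hε : 0 < ε)
    (X : Matrix (Fin m) (Fin n) ℝ) (hX : ∀ i j, 0 ≤ X i j)
    (W : Matrix (Fin m) (Fin r) ℝ) (hW : ∀ i k, ε ≤ W i k)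
    (Hhat : Matrix (Fin r) (Fin n) ℝ) (hHhat : ∀ k j, ε ≤ Hhat k j)
    (k : Fin r) (j : Fin n) :
    Hhat k j * (∑ i, W i k * X i j / ((W * Hhat) i j) ^ (2 - β)) /
        (∑ i, W i k * ((W * Hhat) i j) ^ (β - 1)) ≤
      (1 / ε) * ∑ i, X i j :=
  mu_iterates_bounded_general β hε (fun i => hX i j) (fun i l => hε.le.trans (hW i l))
    (fun i => hW i k) (fun l => hε.le.trans (hHhat l j)) (hε.trans_le (hHhat k j))
end

section
/- Let β ∈ [1,2], ε > 0, and let X be an m×n real matrix with X_{ij} > 0 for all i,j. Let (Wᵗ)_{t ≥ −1} and (Hᵗ)_{t ≥ −1} be sequences of m×r and r×n real matrices with all entries ≥ ε, generated as follows: for each t ≥ 0, with bounded nonnegative extrapolation parameters α_Wᵗ, α_Hᵗ, set Ŵᵗ = Wᵗ + α_Wᵗ·max(Wᵗ − Wᵗ⁻¹, 0) and Ĥᵗ = Hᵗ + α_Hᵗ·max(Hᵗ − Hᵗ⁻¹, 0) (entrywise), and define Wᵗ⁺¹_{ik} = max( ε , Ŵᵗ_{ik}·(∑_j Hᵗ_{kj}·X_{ij}/((ŴᵗHᵗ)_{ij})^{2−β})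 / (∑_j Hᵗ_{kj}·((ŴᵗHᵗ)_{ij})^{β−1}) ) and Hᵗ⁺¹_{kj} = max( ε , Ĥᵗ_{kj}·(∑_i Wᵗ⁺¹_{ik}·X_{ij}/((Wᵗ⁺¹Ĥᵗ)_{ij})^{2−β}) / (∑_i Wᵗ⁺¹_{ik}·((Wᵗ⁺¹Ĥᵗ)_{ij})^{β−1}) ). Assume ∑_{t≥1} (α_Hᵗ)²·‖max(Hᵗ − Hᵗ⁻¹,0)‖_F² < ∞ and ∑_{t≥1} (α_Wᵗ)²·‖max(Wᵗ − Wᵗ⁻¹,0)‖_F² < ∞. Then the sequence (Wᵗ, Hᵗ) is bounded, and every limit point (W*, H*) of a convergent subsequence satisfies the KKT conditions of minimizing D_β(X, WH) over {W ≥ ε, H ≥ ε}: namely W* ≥ ε and H* ≥ ε entrywise; G_{ik} := ∑_j H*_{kj}·( ((W*H*)_{ij})^{β−1} − X_{ij}·((W*H*)_{ij})^{β−2} ) ≥ 0 and G_{ik}·(W*_{ik} − ε) = 0 for all i,k; and F_{kj} := ∑_i W*_{ik}·( ((W*H*)_{ij})^{β−1} − X_{ij}·((W*H*)_{ij})^{β−2}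 ) ≥ 0 and F_{kj}·(H*_{kj} − ε) = 0 for all k,j. -/
/-!
For a fixed right factor `H`, Jensen's inequality applied at a point `V` majorizes `W ↦ D_β(X, W H)`
by a sum of one-variable functions, one for each entry of `W`, and the multiplicative update at `V`
is the unique minimizer of this majorizer over `{W ≥ ε}`. The majorizer touches the objective at `V`
only, whereas the update starts from the current iterate `W`; the tangent-line bound for the convex
objective and a Lipschitz bound for `∂d_β/∂y` show that at `W` it exceeds the objective by at most a
multiple of `‖W - V‖²`. With extrapolation these errors are summable, so the decreases of the
majorizers, which are nonnegative, are summable as well and tend to zero. Along a convergent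
subsequence, continuity and the uniqueness of the minimizer make the limit a fixed point of both
multiplicative updates, and the fixed points of the updates are the KKT points.
-/

namespace BetaNMF

open Filter Topology Matrix Set

section BetaDivergence

variable {β x y z a : ℝ}

/-- The `β`-divergence `d_β(x, y)` of the paper. At `β = 1` and `x = 0` the convention
`0 * log 0 = 0` gives the intended value `d₁(0, y) = y`. -/
noncomputable def betaDiv (β x y : ℝ) : ℝ :=
  if β = 1 then x * Real.log (x / y) - x + y
  else (x ^ β + (β - 1) * y ^ β - β * x * y ^ (β - 1)) / (β * (β - 1))

/-- The derivative `∂d_β/∂y (x, y)`, for `0 < y`. -/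
noncomputable def betaDivDeriv (β x y : ℝ) : ℝ :=
  y ^ (β - 1) - x * y ^ (β - 2)

lemma rpow_sub_one_eq_mul (hy : 0 < y) : y ^ (β - 1) = y * y ^ (β - 2) := by
  rw [show β - 1 = 1 + (β - 2) by ring, Real.rpow_add hy, Real.rpow_one]

lemma hasDerivAt_betaDiv (hβ : β ≠ 0) (hy : 0 < y) :
    HasDerivAt (betaDiv β x) (betaDivDeriv β x y) y := by
  unfold betaDiv betaDivDeriv
  split_ifs with h
  · subst h
    have hlog : HasDerivAt (fun y => x * Real.log (x / y)) (-(x * y⁻¹)) y := by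
      rcases eq_or_ne x 0 with rfl | hx
      · simpa using hasDerivAt_const y (0 : ℝ)
      · refine ((((hasDerivAt_inv hy.ne').const_mul x).log (by positivity)).const_mul x).congr_deriv
          ?_
        field_simp
    refine ((hlog.sub_const x).add (hasDerivAt_id y)).congr_deriv ?_
    norm_num [Real.rpow_neg_one]
    ring
  · have hβ1 : β - 1 ≠ 0 := sub_ne_zero.2 h
    have hpow := Real.hasDerivAt_rpow_const (p := β) (Or.inl hy.ne')
    have hpow' := Real.hasDerivAt_rpow_const (p := β - 1) (Or.inl hy.ne')
    refine ((((hpow.const_mul (β - 1)).const_add (x ^ β)).sub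
      (hpow'.const_mul (β * x))).div_const (β * (β - 1))).congr_deriv ?_
    rw [show β - 1 - 1 = β - 2 by ring]
    field_simp

lemma betaDiv_nonneg (hβ : 1 ≤ β) (hx : 0 ≤ x) (hy : 0 < y) : 0 ≤ betaDiv β x y := by
  unfold betaDiv
  split_ifs with h
  · have hkl := mul_nonneg hy.le (InformationTheory.klFun_nonneg (div_nonneg hx hy.le))
    rw [InformationTheory.klFun_apply] at hkl
    field_simp at hkl
    linarith
  · have hβ1 : 0 < β - 1 := sub_pos.2 (lt_of_le_of_ne hβ (Ne.symm h))
    have hβ0 : 0 < β := by linarith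
    have young := Real.young_inequality_of_nonneg hx (Real.rpow_nonneg hy.le (β - 1))
      (.conjExponent (sub_pos.1 hβ1))
    rw [Real.conjExponent, ← Real.rpow_mul hy.le, mul_div_cancel₀ _ hβ1.ne'] at young
    refine div_nonneg ?_ (by positivity)
    field_simp at young
    linarith

lemma monotoneOn_betaDivDeriv (hβ1 : 1 ≤ β) (hβ2 : β ≤ 2) (hx : 0 ≤ x) :
    MonotoneOn (betaDivDeriv β x) (Ioi 0) := fun y hy _ _ hyz =>
  sub_le_sub (Real.rpow_le_rpow (le_of_lt hy) hyz (by linarith)) <|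
    mul_le_mul_of_nonneg_left (Real.rpow_le_rpow_of_nonpos hy hyz (by linarith)) hx

lemma convexOn_betaDiv (hβ1 : 1 ≤ β) (hβ2 : β ≤ 2) (hx : 0 ≤ x) :
    ConvexOn ℝ (Ioi 0) (betaDiv β x) := by
  have hderiv : ∀ y ∈ Ioi (0 : ℝ), HasDerivAt (betaDiv β x) (betaDivDeriv β x y) y :=
    fun y hy => hasDerivAt_betaDiv (by linarith) hy
  refine MonotoneOn.convexOn_of_deriv (convex_Ioi 0)
    (fun y hy => (hderiv y hy).continuousAt.continuousWithinAt) ?_ ?_ <;> rw [interior_Ioi]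
  · exact fun y hy => (hderiv y hy).differentiableAt.differentiableWithinAt
  · exact (monotoneOn_betaDivDeriv hβ1 hβ2 hx).congr fun y hy => (hderiv y hy).deriv.symm

lemma add_mul_sub_le_of_convexOn {s : Set ℝ} {f : ℝ → ℝ} {f' : ℝ} (hf : ConvexOn ℝ s f)
    (hy : y ∈ s) (hz : z ∈ s) (hf' : HasDerivAt f f' y) : f y + f' * (z - y) ≤ f z := by
  rcases lt_trichotomy y z with hyz | rfl | hzy
  · have hslope := hf.le_slope_of_hasDerivAt hy hz hyz hf'
    rw [slope_def_field, le_div_iff₀ (sub_pos.2 hyz)] at hslope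
    linarith
  · simp
  · have hslope := hf.slope_le_of_hasDerivAt hz hy hzy hf'
    rw [slope_def_field, div_le_iff₀ (sub_pos.2 hzy)] at hslope
    linarith

lemma betaDiv_add_deriv_mul_le (hβ1 : 1 ≤ β) (hβ2 : β ≤ 2) (hx : 0 ≤ x) (hy : 0 < y)
    (hz : 0 < z) : betaDiv β x y + betaDivDeriv β x y * (z - y) ≤ betaDiv β x z :=
  add_mul_sub_le_of_convexOn (convexOn_betaDiv hβ1 hβ2 hx) hy hz
    (hasDerivAt_betaDiv (by linarith) hy)

lemma hasDerivAt_betaDivDeriv (hy : 0 < y) :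
    HasDerivAt (betaDivDeriv β x) ((β - 1) * y ^ (β - 2) + (2 - β) * (x * y ^ (β - 3))) y := by
  have hpow := Real.hasDerivAt_rpow_const (p := β - 1) (Or.inl hy.ne')
  have hpow' := Real.hasDerivAt_rpow_const (p := β - 2) (Or.inl hy.ne')
  refine (hpow.sub (hpow'.const_mul x)).congr_deriv ?_
  rw [show β - 1 - 1 = β - 2 by ring, show β - 2 - 1 = β - 3 by ring]
  ring

/-- A Lipschitz constant of `betaDivDeriv β x` on `[a, ∞)`. -/
noncomputable def betaDivLip (β x a : ℝ) : ℝ :=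
  a ^ (β - 2) + x * a ^ (β - 3)

lemma abs_betaDivDeriv_sub_le (hβ1 : 1 ≤ β) (hβ2 : β ≤ 2) (hx : 0 ≤ x) (ha : 0 < a)
    (hy : a ≤ y) (hz : a ≤ z) :
    |betaDivDeriv β x z - betaDivDeriv β x y| ≤ betaDivLip β x a * |z - y| := by
  refine Convex.norm_image_sub_le_of_norm_hasDerivWithin_le
    (fun u hu => (hasDerivAt_betaDivDeriv (ha.trans_le hu)).hasDerivWithinAt)
    (fun u (hu : a ≤ u) => ?_) (convex_Ici a) hy hz
  have hu0 : 0 < u := ha.trans_le hu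
  have := sub_nonneg.2 hβ1
  have := sub_nonneg.2 hβ2
  rw [Real.norm_of_nonneg (by positivity), betaDivLip]
  refine add_le_add ((mul_le_of_le_one_left (by positivity) (by linarith)).trans ?_)
    ((mul_le_of_le_one_left (by positivity) (by linarith)).trans
      (mul_le_mul_of_nonneg_left ?_ hx)) <;>
    exact Real.rpow_le_rpow_of_nonpos ha hu (by linarith)

lemma betaDiv_le_add_deriv_mul_add_sq (hβ1 : 1 ≤ β) (hβ2 : β ≤ 2) (hx : 0 ≤ x) (ha : 0 < a)
    (hy : a ≤ y) (hz : a ≤ z) :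
    betaDiv β x z ≤
      betaDiv β x y + betaDivDeriv β x y * (z - y) + betaDivLip β x a * (z - y) ^ 2 := by
  have htangent := betaDiv_add_deriv_mul_le hβ1 hβ2 hx (ha.trans_le hz) (ha.trans_le hy)
  have hlip : (betaDivDeriv β x z - betaDivDeriv β x y) * (z - y) ≤
      betaDivLip β x a * (z - y) ^ 2 :=
    calc _ ≤ |betaDivDeriv β x z - betaDivDeriv β x y| * |z - y| :=
          (le_abs_self _).trans_eq (abs_mul _ _)
      _ ≤ betaDivLip β x a * |z - y| * |z - y| :=
          mul_le_mul_of_nonneg_right (abs_betaDivDeriv_sub_le hβ1 hβ2 hx ha hy hz) (abs_nonneg _)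
      _ = betaDivLip β x a * (z - y) ^ 2 := by rw [mul_assoc, abs_mul_abs_self, sq]
  linarith

end BetaDivergence

lemma map_max_lt_of_hasDerivAt {f f' : ℝ → ℝ} {a c s : ℝ} (ha : 0 < a)
    (hf : ∀ t, 0 < t → HasDerivAt f (f' t) t) (hneg : ∀ t, 0 < t → t < c → f' t < 0)
    (hpos : ∀ t, 0 < t → c < t → 0 < f' t) (has : a ≤ s) (hs : s ≠ max a c) :
    f (max a c) < f s := by
  have hcont : ∀ u v : ℝ, a ≤ u → ContinuousOn f (Icc u v) := fun u v hu t ht =>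
    (hf t (by linarith [ht.1])).continuousAt.continuousWithinAt
  rcases hs.lt_or_gt with hlt | hgt
  · have hc : max a c = c := max_eq_right ((lt_max_iff.1 (has.trans_lt hlt)).resolve_left
      (lt_irrefl a)).le
    rw [hc] at hlt ⊢
    refine strictAntiOn_of_deriv_neg (convex_Icc s c) (hcont s c has) (fun t ht => ?_)
      ⟨le_rfl, hlt.le⟩ ⟨hlt.le, le_rfl⟩ hlt
    rw [interior_Icc] at ht
    have ht0 : 0 < t := by linarith [ht.1]
    exact (hf t ht0).deriv ▸ hneg t ht0 ht.2
  · refine strictMonoOn_of_deriv_pos (convex_Icc _ s) (hcont _ s (le_max_left a c))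
      (fun t ht => ?_) ⟨le_rfl, hgt.le⟩ ⟨hgt.le, le_rfl⟩ hgt
    rw [interior_Icc] at ht
    have ht0 : 0 < t := ha.trans ((le_max_left a c).trans_lt ht.1)
    exact (hf t ht0).deriv ▸ hpos t ht0 ((le_max_right a c).trans_lt ht.1)

section MultiplicativeUpdate

variable {I J K : Type*} [Fintype K] {β ε : ℝ} {X : Matrix I J ℝ} {H : Matrix K J ℝ}
  {U V W : Matrix I K ℝ} {i : I} {j : J} {k : K}

lemma apply_mul_apply_le_mul_apply (hV : ∀ i k, 0 < V i k) (hH : ∀ k j, 0 < H k j) :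
    V i k * H k j ≤ (V * H) i j :=
  Finset.single_le_sum (f := fun k => V i k * H k j)
    (fun k _ => (mul_pos (hV i k) (hH k j)).le) (Finset.mem_univ k)

lemma mul_apply_pos [Nonempty K] (hV : ∀ i k, 0 < V i k) (hH : ∀ k j, 0 < H k j) :
    0 < (V * H) i j :=
  Finset.sum_pos (fun k _ => mul_pos (hV i k) (hH k j)) Finset.univ_nonempty

lemma mul_apply_div_le {B : ℝ} (hε : 0 < ε) (hH : ∀ k j, ε ≤ H k j)
    (hHB : ∀ k j, H k j ≤ B) (hV : ∀ i k, ε ≤ V i k) (hVB : ∀ i k, V i k ≤ B) :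
    H k j * (V * H) i j / V i k ≤ B * (∑ _k : K, B * B) / ε := by
  have hB : 0 ≤ B := hε.le.trans ((hH k j).trans (hHB k j))
  have hprod : (V * H) i j ≤ ∑ _k : K, B * B := Finset.sum_le_sum fun l _ =>
    mul_le_mul (hVB i l) (hHB l j) (hε.le.trans (hH l j)) hB
  have hprod0 : 0 ≤ (V * H) i j := Finset.sum_nonneg fun l _ =>
    mul_nonneg (hε.le.trans (hV i l)) (hε.le.trans (hH l j))
  gcongr
  exacts [hHB k j, hV i k]

/-- The weight with which the `k`-th rank-one term enters `(V H)_{ij}`. -/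
noncomputable def muWeight (H : Matrix K J ℝ) (V : Matrix I K ℝ) (i : I) (k : K) (j : J) : ℝ :=
  V i k * H k j / (V * H) i j

lemma sum_muWeight (hy : 0 < (V * H) i j) : ∑ k, muWeight H V i k j = 1 := by
  simp only [muWeight, ← Finset.sum_div]
  exact div_self hy.ne'

lemma sum_muWeight_mul (hV : ∀ i k, 0 < V i k) (hy : 0 < (V * H) i j) :
    ∑ k, muWeight H V i k j * ((V * H) i j * (U i k / V i k)) = (U * H) i j := by
  rw [Matrix.mul_apply (M := U)]
  refine Finset.sum_congr rfl fun k _ => ?_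
  have := hV i k
  rw [muWeight]
  field_simp

lemma betaDiv_mul_apply_le_sum_muWeight [Nonempty K] (hβ1 : 1 ≤ β) (hβ2 : β ≤ 2)
    (hX : 0 ≤ X i j) (hH : ∀ k j, 0 < H k j) (hV : ∀ i k, 0 < V i k)
    (hU : ∀ i k, 0 < U i k) :
    betaDiv β (X i j) ((U * H) i j) ≤
      ∑ k, muWeight H V i k j * betaDiv β (X i j) ((V * H) i j * (U i k / V i k)) := by
  have hy : 0 < (V * H) i j := mul_apply_pos hV hH
  rw [← sum_muWeight_mul hV hy]
  exact (convexOn_betaDiv hβ1 hβ2 hX).map_sum_le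
    (fun k _ => (div_pos (mul_pos (hV i k) (hH k j)) hy).le) (sum_muWeight hy)
    (fun k _ => mul_pos hy (div_pos (hU i k) (hV i k)))

lemma muWeight_mul_betaDiv_le (hβ1 : 1 ≤ β) (hβ2 : β ≤ 2) (hε : 0 < ε)
    (hX : 0 ≤ X i j) (hH : ∀ k j, ε ≤ H k j) (hV : ∀ i k, ε ≤ V i k)
    (hW : ∀ i k, ε ≤ W i k) :
    muWeight H V i k j * betaDiv β (X i j) ((V * H) i j * (W i k / V i k)) ≤
      muWeight H V i k j * betaDiv β (X i j) ((V * H) i j)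
        + betaDivDeriv β (X i j) ((V * H) i j) * (W i k * H k j - V i k * H k j)
        + betaDivLip β (X i j) (ε ^ 2) * (H k j * (V * H) i j / V i k)
          * (W i k - V i k) ^ 2 := by
  have : Nonempty K := ⟨k⟩
  have hH0 : ∀ k j, 0 < H k j := fun k j => hε.trans_le (hH k j)
  have hV0 : ∀ i k, 0 < V i k := fun i k => hε.trans_le (hV i k)
  have hy : V i k * H k j ≤ (V * H) i j := apply_mul_apply_le_mul_apply hV0 hH0
  have hy0 : 0 < (V * H) i j := mul_apply_pos hV0 hH0
  have := hH0 k j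
  have := hV0 i k
  have hyε : ε ^ 2 ≤ (V * H) i j := by nlinarith [hH k j, hV i k]
  have hzε : ε ^ 2 ≤ (V * H) i j * (W i k / V i k) := calc
    ε ^ 2 ≤ H k j * W i k := by nlinarith [hH k j, hW i k]
    _ = V i k * H k j * (W i k / V i k) := by field_simp
    _ ≤ _ := mul_le_mul_of_nonneg_right hy (div_nonneg (hε.le.trans (hW i k)) (hV0 i k).le)
  refine (mul_le_mul_of_nonneg_left (betaDiv_le_add_deriv_mul_add_sq hβ1 hβ2 hX
    (by positivity) hyε hzε) (by rw [muWeight]; positivity)).trans_eq ?_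
  rw [muWeight]
  field_simp

lemma sum_muWeight_mul_betaDiv_le [Nonempty K] (hβ1 : 1 ≤ β) (hβ2 : β ≤ 2) (hε : 0 < ε)
    (hX : 0 ≤ X i j) (hH : ∀ k j, ε ≤ H k j) (hV : ∀ i k, ε ≤ V i k)
    (hW : ∀ i k, ε ≤ W i k) :
    ∑ k, muWeight H V i k j * betaDiv β (X i j) ((V * H) i j * (W i k / V i k)) ≤
      betaDiv β (X i j) ((W * H) i j)
        + ∑ k, betaDivLip β (X i j) (ε ^ 2) * (H k j * (V * H) i j / V i k)
          * (W i k - V i k) ^ 2 := by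
  have hH0 : ∀ k j, 0 < H k j := fun k j => hε.trans_le (hH k j)
  have hy : 0 < (V * H) i j := mul_apply_pos (fun i k => hε.trans_le (hV i k)) hH0
  have hz : 0 < (W * H) i j := mul_apply_pos (fun i k => hε.trans_le (hW i k)) hH0
  refine (Finset.sum_le_sum fun k _ => muWeight_mul_betaDiv_le hβ1 hβ2 hε hX hH hV hW).trans ?_
  rw [Finset.sum_add_distrib, Finset.sum_add_distrib, ← Finset.sum_mul, sum_muWeight hy, one_mul,
    ← Finset.mul_sum, Finset.sum_sub_distrib, ← Matrix.mul_apply, ← Matrix.mul_apply]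
  exact add_le_add_left (betaDiv_add_deriv_mul_le hβ1 hβ2 hX hy hz) _

variable [Fintype J]

/-- The objective `D_β(X, W H)`. -/
noncomputable def nmfLoss [Fintype I] (β : ℝ) (X : Matrix I J ℝ) (W : Matrix I K ℝ)
    (H : Matrix K J ℝ) : ℝ :=
  ∑ i, ∑ j, betaDiv β (X i j) ((W * H) i j)

/-- The partial gradient of `D_β(X, W H)` in the left factor `W`. The gradient in the right factor
is `nmfGrad β Xᵀ Wᵀ Hᵀ`. -/
noncomputable def nmfGrad (β : ℝ) (X : Matrix I J ℝ) (H : Matrix K J ℝ) (W : Matrix I K ℝ)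
    (i : I) (k : K) : ℝ :=
  ∑ j, H k j * betaDivDeriv β (X i j) ((W * H) i j)

/-- The KKT conditions of minimizing `D_β(X, W H)` over `{W ≥ ε}` for fixed `H`, without the
feasibility of `W`. Those in the right factor are `IsStationaryLeft β ε Xᵀ Wᵀ Hᵀ`. -/
def IsStationaryLeft (β ε : ℝ) (X : Matrix I J ℝ) (H : Matrix K J ℝ) (W : Matrix I K ℝ) : Prop :=
  ∀ i k, 0 ≤ nmfGrad β X H W i k ∧ nmfGrad β X H W i k * (W i k - ε) = 0

/-- The numerator of the multiplicative update factor; it is the negative part of the gradient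
of `D_β(X, V H)` in `V`. -/
noncomputable def muNum (β : ℝ) (X : Matrix I J ℝ) (H : Matrix K J ℝ) (V : Matrix I K ℝ)
    (i : I) (k : K) : ℝ :=
  ∑ j, H k j * X i j / (V * H) i j ^ (2 - β)

/-- The denominator of the multiplicative update factor; it is the positive part of the gradient
of `D_β(X, V H)` in `V`. -/
noncomputable def muDen (β : ℝ) (H : Matrix K J ℝ) (V : Matrix I K ℝ) (i : I) (k : K) : ℝ :=
  ∑ j, H k j * (V * H) i j ^ (β - 1)

/-- The multiplicative update of the left factor, evaluated at `V` and truncated at `ε`. The right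
factor is updated by the same map on the transposed problem. -/
noncomputable def muStep (β ε : ℝ) (X : Matrix I J ℝ) (H : Matrix K J ℝ) (V : Matrix I K ℝ) :
    Matrix I K ℝ :=
  of fun i k => max ε (V i k * muNum β X H V i k / muDen β H V i k)

/-- The `(i, k)` part of the separable majorizer at `V` of `D_β(X, W H)` in `W`, which Jensen's
inequality provides; `s` stands for the entry `W i k`. -/
noncomputable def muSurrogate (β : ℝ) (X : Matrix I J ℝ) (H : Matrix K J ℝ) (V : Matrix I K ℝ)
    (i : I) (k : K) (s : ℝ) : ℝ :=
  ∑ j, muWeight H V i k j * betaDiv β (X i j) ((V * H) i j * (s / V i k))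

/-- The amount by which the multiplicative update at `V` decreases the `(i, k)` part of the
majorizer, compared with its value at `W`. -/
noncomputable def muDecrease (β ε : ℝ) (X : Matrix I J ℝ) (H : Matrix K J ℝ)
    (V W : Matrix I K ℝ) (i : I) (k : K) : ℝ :=
  muSurrogate β X H V i k (W i k) - muSurrogate β X H V i k (muStep β ε X H V i k)

lemma le_muStep : ε ≤ muStep β ε X H V i k := le_max_left _ _

lemma muDen_pos [Nonempty J] (hH : ∀ k j, 0 < H k j) (hV : ∀ i k, 0 < V i k) :
    0 < muDen β H V i k :=
  have : Nonempty K := ⟨k⟩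
  Finset.sum_pos (fun j _ => mul_pos (hH k j) (Real.rpow_pos_of_pos (mul_apply_pos hV hH) _))
    Finset.univ_nonempty

lemma sum_mul_betaDivDeriv (hy : ∀ j, 0 < (V * H) i j) {q : ℝ} (hq : 0 < q) :
    ∑ j, H k j * betaDivDeriv β (X i j) ((V * H) i j * q) =
      q ^ (β - 2) * (q * muDen β H V i k - muNum β X H V i k) := by
  rw [muDen, muNum, mul_sub, Finset.mul_sum, Finset.mul_sum, Finset.mul_sum,
    ← Finset.sum_sub_distrib]
  refine Finset.sum_congr rfl fun j _ => ?_
  rw [betaDivDeriv, Real.mul_rpow (hy j).le hq.le, Real.mul_rpow (hy j).le hq.le,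
    rpow_sub_one_eq_mul hq, show 2 - β = -(β - 2) by ring, Real.rpow_neg (hy j).le,
    div_inv_eq_mul]
  ring

lemma hasDerivAt_muSurrogate (hβ : β ≠ 0) (hH : ∀ k j, 0 < H k j)
    (hV : ∀ i k, 0 < V i k) {s : ℝ} (hs : 0 < s) :
    HasDerivAt (muSurrogate β X H V i k)
      ((s / V i k) ^ (β - 2) * (s / V i k * muDen β H V i k - muNum β X H V i k)) s := by
  have : Nonempty K := ⟨k⟩
  have hy : ∀ j, 0 < (V * H) i j := fun j => mul_apply_pos hV hH
  have hq : 0 < s / V i k := div_pos hs (hV i k)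
  rw [← sum_mul_betaDivDeriv hy hq]
  refine HasDerivAt.fun_sum fun j _ => ?_
  have hinner : HasDerivAt (fun s => (V * H) i j * (s / V i k)) ((V * H) i j * (1 / V i k)) s :=
    ((hasDerivAt_id s).div_const _).const_mul _
  refine (((hasDerivAt_betaDiv hβ (mul_pos (hy j) hq)).comp s hinner).const_mul
    (muWeight H V i k j)).congr_deriv ?_
  have := hV i k
  have := hy j
  rw [muWeight]
  field_simp

lemma muSurrogate_muStep_lt [Nonempty J] (hβ : β ≠ 0) (hε : 0 < ε)
    (hH : ∀ k j, 0 < H k j) (hV : ∀ i k, 0 < V i k) {s : ℝ} (hs : ε ≤ s)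
    (hne : s ≠ muStep β ε X H V i k) :
    muSurrogate β X H V i k (muStep β ε X H V i k) < muSurrogate β X H V i k s := by
  have hden : 0 < muDen β H V i k := muDen_pos hH hV
  have hv := hV i k
  refine map_max_lt_of_hasDerivAt hε (fun t ht => hasDerivAt_muSurrogate hβ hH hV ht)
    (fun t ht hlt => mul_neg_of_pos_of_neg (by positivity) ?_)
    (fun t ht hgt => mul_pos (by positivity) ?_) hs hne
  · rw [lt_div_iff₀ hden] at hlt
    rw [sub_neg, div_mul_eq_mul_div, div_lt_iff₀ hv]
    linarith
  · rw [div_lt_iff₀ hden] at hgt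
    rw [sub_pos, div_mul_eq_mul_div, lt_div_iff₀ hv]
    linarith

lemma muDecrease_nonneg [Nonempty J] (hβ : β ≠ 0) (hε : 0 < ε)
    (hH : ∀ k j, 0 < H k j) (hV : ∀ i k, 0 < V i k) (hW : ε ≤ W i k) :
    0 ≤ muDecrease β ε X H V W i k := by
  rcases eq_or_ne (W i k) (muStep β ε X H V i k) with heq | hne
  · simp [muDecrease, heq]
  · exact (sub_pos.2 (muSurrogate_muStep_lt hβ hε hH hV hW hne)).le

lemma eq_muStep_of_muDecrease_eq_zero [Nonempty J] (hβ : β ≠ 0) (hε : 0 < ε)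
    (hH : ∀ k j, 0 < H k j) (hV : ∀ i k, 0 < V i k) (hW : ε ≤ W i k)
    (h : muDecrease β ε X H V W i k = 0) : W i k = muStep β ε X H V i k := by
  by_contra hne
  exact (sub_pos.2 (muSurrogate_muStep_lt hβ hε hH hV hW hne)).ne' h

lemma nmfGrad_eq_muDen_sub_muNum (hy : ∀ j, 0 < (W * H) i j) :
    nmfGrad β X H W i k = muDen β H W i k - muNum β X H W i k := by
  simpa [nmfGrad] using sum_mul_betaDivDeriv (X := X) (β := β) (k := k) hy one_pos

lemma isStationaryLeft_of_muStep_eq [Nonempty J] (hε : 0 < ε) (hH : ∀ k j, 0 < H k j)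
    (hW : ∀ i k, ε ≤ W i k) (hfix : muStep β ε X H W = W) : IsStationaryLeft β ε X H W := by
  intro i k
  have : Nonempty K := ⟨k⟩
  have hW0 : ∀ i k, 0 < W i k := fun i k => hε.trans_le (hW i k)
  have hden : 0 < muDen β H W i k := muDen_pos hH hW0
  have hmax : max ε (W i k * muNum β X H W i k / muDen β H W i k) = W i k := congr_fun₂ hfix i k
  have hle : muNum β X H W i k ≤ muDen β H W i k := by
    have := (le_max_right _ _).trans_eq hmax
    rw [div_le_iff₀ hden] at this
    exact le_of_mul_le_mul_left this (hW0 i k)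
  rw [nmfGrad_eq_muDen_sub_muNum fun j => mul_apply_pos hW0 hH]
  refine ⟨sub_nonneg.2 hle, ?_⟩
  rcases max_choice ε (W i k * muNum β X H W i k / muDen β H W i k) with h | h <;> rw [h] at hmax
  · rw [← hmax, sub_self, mul_zero]
  · rw [div_eq_iff hden.ne', mul_right_inj' (hW0 i k).ne'] at hmax
    rw [hmax, sub_self, zero_mul]

lemma muStep_le (hε : 0 < ε) {b : ℝ} (hb : 0 ≤ b) (hX : ∀ i j, 0 ≤ X i j)
    (hXb : ∀ i j, X i j ≤ b) (hH : ∀ k j, ε ≤ H k j) (hV : ∀ i k, 0 < V i k) (i : I) (k : K) :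
    muStep β ε X H V i k ≤ max ε (b / ε) := by
  have : Nonempty K := ⟨k⟩
  have hH0 : ∀ k j, 0 < H k j := fun k j => hε.trans_le (hH k j)
  have hden : 0 ≤ muDen β H V i k := Finset.sum_nonneg fun j _ =>
    mul_nonneg (hH0 k j).le (Real.rpow_nonneg (mul_apply_pos hV hH0).le _)
  refine max_le_max le_rfl (div_le_of_le_mul₀ hden (by positivity) ?_)
  rw [muNum, muDen, Finset.mul_sum, Finset.mul_sum]
  refine Finset.sum_le_sum fun j _ => ?_
  have hy : V i k * H k j ≤ (V * H) i j := apply_mul_apply_le_mul_apply hV hH0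
  have hy0 : 0 < (V * H) i j := mul_apply_pos hV hH0
  rw [rpow_sub_one_eq_mul hy0, show 2 - β = -(β - 2) by ring, Real.rpow_neg hy0.le,
    div_inv_eq_mul]
  calc V i k * (H k j * X i j * (V * H) i j ^ (β - 2))
      = V i k * H k j * X i j * (V * H) i j ^ (β - 2) := by ring
    _ ≤ (V * H) i j * b * (V * H) i j ^ (β - 2) := by gcongr; exacts [hX i j, hXb i j]
    _ = b / ε * (ε * ((V * H) i j * (V * H) i j ^ (β - 2))) := by field_simp
    _ ≤ b / ε * (H k j * ((V * H) i j * (V * H) i j ^ (β - 2))) := by gcongr; exact hH k j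

end MultiplicativeUpdate

lemma single_le_sum_sum {I K M : Type*} [Fintype I] [Fintype K] [AddCommMonoid M] [PartialOrder M]
    [IsOrderedAddMonoid M] {f : I → K → M} (hf : ∀ i k, 0 ≤ f i k) (i : I) (k : K) :
    f i k ≤ ∑ i, ∑ k, f i k :=
  (Finset.single_le_sum (fun k _ => hf i k) (Finset.mem_univ k)).trans <|
    Finset.single_le_sum (f := fun i => ∑ k, f i k)
      (fun i _ => Finset.sum_nonneg fun k _ => hf i k) (Finset.mem_univ i)

section Descent

variable {I J K : Type*} [Fintype I] [Fintype J] [Fintype K] {β ε : ℝ} {X : Matrix I J ℝ}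
  {H : Matrix K J ℝ} {V W : Matrix I K ℝ}

lemma nmfLoss_transpose : nmfLoss β Xᵀ Hᵀ Wᵀ = nmfLoss β X W H := by
  simp only [nmfLoss, ← transpose_mul, transpose_apply]
  exact Finset.sum_comm

lemma nmfLoss_nonneg [Nonempty K] (hβ : 1 ≤ β) (hX : ∀ i j, 0 ≤ X i j) (hW : ∀ i k, 0 < W i k)
    (hH : ∀ k j, 0 < H k j) : 0 ≤ nmfLoss β X W H :=
  Finset.sum_nonneg fun i _ => Finset.sum_nonneg fun j _ =>
    betaDiv_nonneg hβ (hX i j) (mul_apply_pos hW hH)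

lemma nmfLoss_muStep_add_le [Nonempty K] (hβ1 : 1 ≤ β) (hβ2 : β ≤ 2) (hε : 0 < ε)
    (hX : ∀ i j, 0 ≤ X i j) (hH : ∀ k j, ε ≤ H k j) (hV : ∀ i k, ε ≤ V i k)
    (hW : ∀ i k, ε ≤ W i k) :
    nmfLoss β X (muStep β ε X H V) H + ∑ i, ∑ k, muDecrease β ε X H V W i k ≤
      nmfLoss β X W H + ∑ i, ∑ j, ∑ k,
        betaDivLip β (X i j) (ε ^ 2) * (H k j * (V * H) i j / V i k) * (W i k - V i k) ^ 2 := by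
  rw [nmfLoss, nmfLoss, ← Finset.sum_add_distrib, ← Finset.sum_add_distrib]
  refine Finset.sum_le_sum fun i _ => ?_
  have hjensen : ∑ j, betaDiv β (X i j) ((muStep β ε X H V * H) i j) ≤
      ∑ k, muSurrogate β X H V i k (muStep β ε X H V i k) := by
    simp only [muSurrogate]
    rw [Finset.sum_comm]
    exact Finset.sum_le_sum fun j _ => betaDiv_mul_apply_le_sum_muWeight hβ1 hβ2 (hX i j)
      (fun k j => hε.trans_le (hH k j)) (fun i k => hε.trans_le (hV i k))
      (fun i k => hε.trans_le le_muStep)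
  have htangent : ∑ k, muSurrogate β X H V i k (W i k) ≤
      ∑ j, betaDiv β (X i j) ((W * H) i j) + ∑ j, ∑ k,
        betaDivLip β (X i j) (ε ^ 2) * (H k j * (V * H) i j / V i k) * (W i k - V i k) ^ 2 := by
    simp only [muSurrogate]
    rw [Finset.sum_comm, ← Finset.sum_add_distrib]
    exact Finset.sum_le_sum fun j _ => sum_muWeight_mul_betaDiv_le hβ1 hβ2 hε (hX i j) hH hV hW
  simp only [muDecrease, Finset.sum_sub_distrib]
  linarith

lemma exists_nmfLoss_muStep_add_le [Nonempty K] (hβ1 : 1 ≤ β) (hβ2 : β ≤ 2) (hε : 0 < ε)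
    (hX : ∀ i j, 0 ≤ X i j) (B : ℝ) :
    ∃ C : ℝ, ∀ (H : Matrix K J ℝ) (V W : Matrix I K ℝ), (∀ k j, ε ≤ H k j) →
      (∀ k j, H k j ≤ B) → (∀ i k, ε ≤ V i k) → (∀ i k, V i k ≤ B) → (∀ i k, ε ≤ W i k) →
      nmfLoss β X (muStep β ε X H V) H + ∑ i, ∑ k, muDecrease β ε X H V W i k ≤
        nmfLoss β X W H + C * ∑ i, ∑ k, (W i k - V i k) ^ 2 := by
  refine ⟨∑ i, ∑ j, ∑ _k : K, betaDivLip β (X i j) (ε ^ 2) * (B * (∑ _k : K, B * B) / ε),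
    fun H V W hH hHB hV hVB hW =>
      (nmfLoss_muStep_add_le hβ1 hβ2 hε hX hH hV hW).trans (add_le_add_right ?_ _)⟩
  simp only [Finset.sum_mul]
  refine Finset.sum_le_sum fun i _ => Finset.sum_le_sum fun j _ => Finset.sum_le_sum fun k _ => ?_
  have hcoeff := mul_apply_div_le (i := i) (j := j) (k := k) hε hH hHB hV hVB
  have hlip : 0 ≤ betaDivLip β (X i j) (ε ^ 2) :=
    add_nonneg (by positivity) (mul_nonneg (hX i j) (by positivity))
  have hB : 0 ≤ B := hε.le.trans ((hH k j).trans (hHB k j))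
  exact mul_le_mul (mul_le_mul_of_nonneg_left hcoeff hlip)
    (single_le_sum_sum (fun i k => sq_nonneg (W i k - V i k)) i k) (sq_nonneg _) (by positivity)

end Descent

section Continuity

variable {I J K S : Type*} [Fintype K] {β ε : ℝ} {X : Matrix I J ℝ} {l : Filter S}
  {Hs : S → Matrix K J ℝ} {Vs Ws : S → Matrix I K ℝ} {H : Matrix K J ℝ} {V W : Matrix I K ℝ}

lemma tendsto_mul_apply (hHs : ∀ k j, Tendsto (fun s => Hs s k j) l (𝓝 (H k j)))
    (hVs : ∀ i k, Tendsto (fun s => Vs s i k) l (𝓝 (V i k))) (i : I) (j : J) :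
    Tendsto (fun s => (Vs s * Hs s) i j) l (𝓝 ((V * H) i j)) :=
  tendsto_finsetSum _ fun k _ => (hVs i k).mul (hHs k j)

variable [Fintype J]

lemma tendsto_muSurrogate (hβ : β ≠ 0) (hH : ∀ k j, 0 < H k j) (hV : ∀ i k, 0 < V i k)
    (hHs : ∀ k j, Tendsto (fun s => Hs s k j) l (𝓝 (H k j)))
    (hVs : ∀ i k, Tendsto (fun s => Vs s i k) l (𝓝 (V i k))) {i : I} {k : K} {u : S → ℝ} {a : ℝ}
    (ha : 0 < a) (hu : Tendsto u l (𝓝 a)) :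
    Tendsto (fun s => muSurrogate β X (Hs s) (Vs s) i k (u s)) l (𝓝 (muSurrogate β X H V i k a)) :=
  tendsto_finsetSum _ fun j _ => by
    have : Nonempty K := ⟨k⟩
    have hy : 0 < (V * H) i j := mul_apply_pos hV hH
    have hprod := tendsto_mul_apply hHs hVs i j
    exact (((hVs i k).mul (hHs k j)).div hprod hy.ne').mul <|
      (hasDerivAt_betaDiv hβ (mul_pos hy (div_pos ha (hV i k)))).continuousAt.tendsto.comp <|
        hprod.mul (hu.div (hVs i k) (hV i k).ne')

variable [Nonempty J]

lemma tendsto_muStep (hH : ∀ k j, 0 < H k j) (hV : ∀ i k, 0 < V i k)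
    (hHs : ∀ k j, Tendsto (fun s => Hs s k j) l (𝓝 (H k j)))
    (hVs : ∀ i k, Tendsto (fun s => Vs s i k) l (𝓝 (V i k))) (i : I) (k : K) :
    Tendsto (fun s => muStep β ε X (Hs s) (Vs s) i k) l (𝓝 (muStep β ε X H V i k)) := by
  have : Nonempty K := ⟨k⟩
  have hrpow : ∀ (p : ℝ) (j : J),
      Tendsto (fun s => (Vs s * Hs s) i j ^ p) l (𝓝 ((V * H) i j ^ p)) := fun p j =>
    (tendsto_mul_apply hHs hVs i j).rpow_const (Or.inl (mul_apply_pos hV hH).ne')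
  have hnum : Tendsto (fun s => muNum β X (Hs s) (Vs s) i k) l (𝓝 (muNum β X H V i k)) :=
    tendsto_finsetSum _ fun j _ => ((hHs k j).mul_const _).div (hrpow _ j)
      (Real.rpow_pos_of_pos (mul_apply_pos hV hH) _).ne'
  have hden : Tendsto (fun s => muDen β (Hs s) (Vs s) i k) l (𝓝 (muDen β H V i k)) :=
    tendsto_finsetSum _ fun j _ => (hHs k j).mul (hrpow _ j)
  exact tendsto_const_nhds.max (((hVs i k).mul hnum).div hden (muDen_pos hH hV).ne')

lemma tendsto_muDecrease (hβ : β ≠ 0) (hε : 0 < ε) (hH : ∀ k j, 0 < H k j)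
    (hV : ∀ i k, 0 < V i k) (hW : ∀ i k, 0 < W i k)
    (hHs : ∀ k j, Tendsto (fun s => Hs s k j) l (𝓝 (H k j)))
    (hVs : ∀ i k, Tendsto (fun s => Vs s i k) l (𝓝 (V i k)))
    (hWs : ∀ i k, Tendsto (fun s => Ws s i k) l (𝓝 (W i k))) (i : I) (k : K) :
    Tendsto (fun s => muDecrease β ε X (Hs s) (Vs s) (Ws s) i k) l
      (𝓝 (muDecrease β ε X H V W i k)) :=
  (tendsto_muSurrogate hβ hH hV hHs hVs (hW i k) (hWs i k)).sub <|
    tendsto_muSurrogate hβ hH hV hHs hVs (hε.trans_le le_muStep) (tendsto_muStep hH hV hHs hVs i k)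

lemma muStep_eq_of_tendsto_muDecrease [NeBot l] (hβ : β ≠ 0) (hε : 0 < ε)
    (hH : ∀ k j, 0 < H k j) (hW : ∀ i k, ε ≤ W i k)
    (hHs : ∀ k j, Tendsto (fun s => Hs s k j) l (𝓝 (H k j)))
    (hVs : ∀ i k, Tendsto (fun s => Vs s i k) l (𝓝 (W i k)))
    (hWs : ∀ i k, Tendsto (fun s => Ws s i k) l (𝓝 (W i k)))
    (hdec : ∀ i k, Tendsto (fun s => muDecrease β ε X (Hs s) (Vs s) (Ws s) i k) l (𝓝 0)) :
    muStep β ε X H W = W := by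
  have hW0 : ∀ i k, 0 < W i k := fun i k => hε.trans_le (hW i k)
  ext i k
  exact (eq_muStep_of_muDecrease_eq_zero hβ hε hH hW0 (hW i k) <| tendsto_nhds_unique
    (tendsto_muDecrease hβ hε hH hW0 hW0 hHs hVs hWs i k) (hdec i k)).symm

end Continuity

section Sequences

lemma tendsto_zero_of_add_le {E d e : ℕ → ℝ} (hE : ∀ t, 0 ≤ E t) (hd : ∀ t, 0 ≤ d t)
    (he : Summable e) (h : ∀ t, E (t + 1) + d t ≤ E t + e t) : Tendsto d atTop (𝓝 0) := by
  have hsum : ∀ n, E n + ∑ t ∈ Finset.range n, d t ≤ E 0 + ∑ t ∈ Finset.range n, e t := by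
    intro n
    induction n with
    | zero => simp
    | succ n ih => simp only [Finset.sum_range_succ]; linarith [h n]
  obtain ⟨M, hM⟩ := he.hasSum.tendsto_sum_nat.bddAbove_range
  refine (summable_of_sum_range_le (c := E 0 + M) hd fun n => ?_).tendsto_atTop_zero
  linarith [hsum n, hE n, hM ⟨n, rfl⟩]

lemma tendsto_zero_of_summable_sq {d : ℕ → ℝ} (h : Summable fun t => d t ^ 2) :
    Tendsto d atTop (𝓝 0) := by
  rw [tendsto_zero_iff_abs_tendsto_zero]
  simpa [Function.comp_def, Real.sqrt_sq_eq_abs] using h.tendsto_atTop_zero.sqrt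

lemma exists_forall_le_of_forall_bddAbove {ι κ T : Type*} [Finite ι] [Finite κ]
    {A : T → Matrix ι κ ℝ} (h : ∀ i k, BddAbove (range fun t => A t i k)) :
    ∃ B, ∀ t i k, A t i k ≤ B := by
  choose b hb using h
  obtain ⟨B, hB⟩ := (finite_range (Function.uncurry b)).bddAbove
  exact ⟨B, fun t i k => (hb i k ⟨t, rfl⟩).trans (hB ⟨(i, k), rfl⟩)⟩

lemma exists_forall_le_of_succ_le {ι κ : Type*} [Finite ι] [Finite κ] {A : ℕ → Matrix ι κ ℝ}
    {b : ℝ} (hA : ∀ t i k, A (t + 1) i k ≤ b) : ∃ B, ∀ t i k, A t i k ≤ B := by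
  refine exists_forall_le_of_forall_bddAbove fun i k => ⟨max (A 0 i k) b, ?_⟩
  rintro _ ⟨_ | t, rfl⟩
  exacts [le_max_left _ _, le_max_of_le_right (hA t i k)]

lemma exists_tendsto_atTop_succ_eq {φ : ℕ → ℕ} (hφ : StrictMono φ) :
    ∃ ψ : ℕ → ℕ, Tendsto ψ atTop atTop ∧ ∀ s, ψ s + 1 = φ (s + 1) :=
  ⟨fun s => φ (s + 1) - 1,
    (tendsto_sub_atTop_nat 1).comp (hφ.tendsto_atTop.comp (tendsto_add_atTop_nat 1)),
    fun s => Nat.sub_add_cancel ((Nat.zero_le _).trans_lt (hφ s.lt_succ_self))⟩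

lemma exists_bound_of_succ_le {ι κ : Type*} [Finite ι] [Finite κ] {A Ahat : ℕ → Matrix ι κ ℝ}
    {b : ℝ} (hA : ∀ t i k, A (t + 1) i k ≤ b)
    (hsum : ∀ i k, Summable fun t => (A t i k - Ahat t i k) ^ 2) :
    ∃ B, ∀ t i k, A t i k ≤ B ∧ Ahat t i k ≤ B := by
  obtain ⟨B, hB⟩ := exists_forall_le_of_succ_le hA
  obtain ⟨D, hD⟩ := exists_forall_le_of_forall_bddAbove (A := fun t => Ahat t - A t) fun i k => by
    simpa using (tendsto_zero_of_summable_sq (hsum i k)).neg.bddAbove_range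
  refine ⟨max B (B + D), fun t i k => ⟨le_max_of_le_left (hB t i k), le_max_of_le_right ?_⟩⟩
  have : Ahat t i k - A t i k ≤ D := hD t i k
  linarith [hB t i k]

lemma le_of_extrapolation {ι κ : Type*} {A Ahat : ℕ → Matrix ι κ ℝ} {α : ℕ → ℝ} {ε : ℝ}
    (hα : ∀ t, 0 ≤ α t) (hA : ∀ t i k, ε ≤ A t i k)
    (hhat : ∀ t i k, Ahat t i k = A (t + 1) i k + α t * max (A (t + 1) i k - A t i k) 0)
    (t : ℕ) (i : ι) (k : κ) : ε ≤ Ahat t i k :=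
  hhat t i k ▸ le_add_of_le_of_nonneg (hA (t + 1) i k) (mul_nonneg (hα t) (le_max_right _ _))

lemma summable_sq_sub_of_extrapolation {ι κ : Type*} [Fintype ι] [Fintype κ]
    {A Ahat : ℕ → Matrix ι κ ℝ} {α : ℕ → ℝ}
    (hhat : ∀ t i k, Ahat t i k = A (t + 1) i k + α t * max (A (t + 1) i k - A t i k) 0)
    (hsum : Summable fun t => α (t + 1) ^ 2 * ∑ i, ∑ k, max (A (t + 2) i k - A (t + 1) i k) 0 ^ 2)
    (i : ι) (k : κ) : Summable fun t => (A (t + 1) i k - Ahat t i k) ^ 2 := by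
  refine (summable_nat_add_iff 1).1 (hsum.of_nonneg_of_le (fun t => sq_nonneg _) fun t => ?_)
  rw [hhat, sub_add_cancel_left, neg_sq, mul_pow]
  exact mul_le_mul_of_nonneg_left (single_le_sum_sum (f := fun i k =>
    max (A (t + 2) i k - A (t + 1) i k) 0 ^ 2) (fun i k => sq_nonneg _) i k) (sq_nonneg _)

end Sequences

section InexactUpdates

variable {I J K : Type*} [Fintype I] [Fintype J] [Fintype K] {β ε : ℝ} {X : Matrix I J ℝ}
  {W What : ℕ → Matrix I K ℝ} {H Hhat : ℕ → Matrix K J ℝ}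

/-- Alternating multiplicative updates of `W` and `H` that are evaluated at perturbed points `What`
and `Hhat`, with square-summable perturbations. The extrapolated updates of the paper are of this
form, whatever the extrapolation rule. -/
structure IsInexactMU (β ε : ℝ) (X : Matrix I J ℝ) (W What : ℕ → Matrix I K ℝ)
    (H Hhat : ℕ → Matrix K J ℝ) : Prop where
  le_W : ∀ t i k, ε ≤ W t i k
  le_H : ∀ t k j, ε ≤ H t k j
  le_What : ∀ t i k, ε ≤ What t i k
  le_Hhat : ∀ t k j, ε ≤ Hhat t k j
  W_succ : ∀ t, W (t + 1) = muStep β ε X (H t) (What t)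
  H_succ : ∀ t, (H (t + 1))ᵀ = muStep β ε Xᵀ (W (t + 1))ᵀ (Hhat t)ᵀ
  summable_W : ∀ i k, Summable fun t => (W t i k - What t i k) ^ 2
  summable_H : ∀ k j, Summable fun t => (H t k j - Hhat t k j) ^ 2

namespace IsInexactMU

lemma exists_bound (h : IsInexactMU β ε X W What H Hhat) (hε : 0 < ε)
    (hX : ∀ i j, 0 ≤ X i j) :
    ∃ B, ∀ t, (∀ i k, W t i k ≤ B ∧ What t i k ≤ B) ∧ ∀ k j, H t k j ≤ B ∧ Hhat t k j ≤ B := by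
  have hb : 0 ≤ ∑ i, ∑ j, X i j := Finset.sum_nonneg fun i _ => Finset.sum_nonneg fun j _ => hX i j
  have hXb : ∀ i j, X i j ≤ ∑ i, ∑ j, X i j := single_le_sum_sum hX
  obtain ⟨B, hB⟩ := exists_bound_of_succ_le (fun t i k => h.W_succ t ▸
    muStep_le hε hb hX hXb (h.le_H t) (fun i k => hε.trans_le (h.le_What t i k)) i k) h.summable_W
  obtain ⟨D, hD⟩ := exists_bound_of_succ_le (fun t k j => (congr_fun₂ (h.H_succ t) j k).trans_le <|
    muStep_le hε hb (fun j i => hX i j) (fun j i => hXb i j) (fun k i => h.le_W (t + 1) i k)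
      (fun j k => hε.trans_le (h.le_Hhat t k j)) j k) h.summable_H
  exact ⟨max B D, fun t =>
    ⟨fun i k => (hB t i k).imp le_max_of_le_left le_max_of_le_left,
      fun k j => (hD t k j).imp le_max_of_le_right le_max_of_le_right⟩⟩

lemma exists_nmfLoss_succ_add_le [Nonempty K]
    (h : IsInexactMU β ε X W What H Hhat) (hβ1 : 1 ≤ β) (hβ2 : β ≤ 2) (hε : 0 < ε)
    (hX : ∀ i j, 0 ≤ X i j) :
    ∃ C D : ℝ, ∀ t, nmfLoss β X (W (t + 1)) (H (t + 1)) +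
        (∑ i, ∑ k, muDecrease β ε X (H t) (What t) (W t) i k +
          ∑ j, ∑ k, muDecrease β ε Xᵀ (W (t + 1))ᵀ (Hhat t)ᵀ (H t)ᵀ j k) ≤
      nmfLoss β X (W t) (H t) + (C * ∑ i, ∑ k, (W t i k - What t i k) ^ 2 +
        D * ∑ j, ∑ k, (H t k j - Hhat t k j) ^ 2) := by
  obtain ⟨B, hB⟩ := h.exists_bound hε hX
  obtain ⟨C, hC⟩ := exists_nmfLoss_muStep_add_le (K := K) hβ1 hβ2 hε hX B
  obtain ⟨D, hD⟩ := exists_nmfLoss_muStep_add_le (K := K) (X := Xᵀ) hβ1 hβ2 hε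
    (fun j i => hX i j) B
  refine ⟨C, D, fun t => ?_⟩
  have hstepW := hC (H t) (What t) (W t) (h.le_H t) (fun k j => ((hB t).2 k j).1) (h.le_What t)
    (fun i k => ((hB t).1 i k).2) (h.le_W t)
  have hstepH := hD (W (t + 1))ᵀ (Hhat t)ᵀ (H t)ᵀ (fun k i => h.le_W (t + 1) i k)
    (fun k i => ((hB (t + 1)).1 i k).1) (fun j k => h.le_Hhat t k j)
    (fun j k => ((hB t).2 k j).2) (fun j k => h.le_H t k j)
  rw [← h.W_succ] at hstepW
  rw [← h.H_succ, nmfLoss_transpose, nmfLoss_transpose] at hstepH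
  simp only [transpose_apply] at hstepH
  linarith

lemma tendsto_muDecrease_zero [Nonempty I] [Nonempty J] [Nonempty K]
    (h : IsInexactMU β ε X W What H Hhat) (hβ1 : 1 ≤ β) (hβ2 : β ≤ 2) (hε : 0 < ε)
    (hX : ∀ i j, 0 ≤ X i j) :
    (∀ i k, Tendsto (fun t => muDecrease β ε X (H t) (What t) (W t) i k) atTop (𝓝 0)) ∧
      ∀ j k, Tendsto (fun t => muDecrease β ε Xᵀ (W (t + 1))ᵀ (Hhat t)ᵀ (H t)ᵀ j k) atTop
        (𝓝 0) := by
  have hβ : β ≠ 0 := (zero_lt_one.trans_le hβ1).ne'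
  have hW : ∀ t i k, 0 < W t i k := fun t i k => hε.trans_le (h.le_W t i k)
  have hH : ∀ t k j, 0 < H t k j := fun t k j => hε.trans_le (h.le_H t k j)
  have hdecW : ∀ t i k, 0 ≤ muDecrease β ε X (H t) (What t) (W t) i k := fun t i k =>
    muDecrease_nonneg hβ hε (hH t) (fun i k => hε.trans_le (h.le_What t i k)) (h.le_W t i k)
  have hdecH : ∀ t j k, 0 ≤ muDecrease β ε Xᵀ (W (t + 1))ᵀ (Hhat t)ᵀ (H t)ᵀ j k := fun t j k =>
    muDecrease_nonneg hβ hε (fun k i => hW (t + 1) i k)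
      (fun j k => hε.trans_le (h.le_Hhat t k j)) (h.le_H t k j)
  have hsumW := fun t => Finset.univ.sum_nonneg fun i _ => Finset.univ.sum_nonneg fun k _ =>
    hdecW t i k
  have hsumH := fun t => Finset.univ.sum_nonneg fun j _ => Finset.univ.sum_nonneg fun k _ =>
    hdecH t j k
  obtain ⟨C, D, hdescent⟩ := h.exists_nmfLoss_succ_add_le hβ1 hβ2 hε hX
  have htotal := tendsto_zero_of_add_le (fun t => nmfLoss_nonneg hβ1 hX (hW t) (hH t))
    (fun t => add_nonneg (hsumW t) (hsumH t))
    (((summable_sum fun i _ => summable_sum fun k _ => h.summable_W i k).mul_left C).add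
      ((summable_sum fun j _ => summable_sum fun k _ => h.summable_H k j).mul_left D)) hdescent
  exact ⟨fun i k => squeeze_zero (hdecW · i k) (fun t => (single_le_sum_sum (hdecW t) i k).trans <|
      le_add_of_nonneg_right (hsumH t)) htotal,
    fun j k => squeeze_zero (hdecH · j k) (fun t => (single_le_sum_sum (hdecH t) j k).trans <|
      le_add_of_nonneg_left (hsumW t)) htotal⟩

variable {φ : ℕ → ℕ} {Wstar : Matrix I K ℝ} {Hstar : Matrix K J ℝ}

lemma muStep_eq_of_tendsto [Nonempty I] [Nonempty J] [Nonempty K]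
    (h : IsInexactMU β ε X W What H Hhat) (hβ1 : 1 ≤ β) (hβ2 : β ≤ 2) (hε : 0 < ε)
    (hX : ∀ i j, 0 ≤ X i j) (hφ : Tendsto φ atTop atTop)
    (hWs : ∀ i k, Tendsto (fun s => W (φ s) i k) atTop (𝓝 (Wstar i k)))
    (hHs : ∀ k j, Tendsto (fun s => H (φ s) k j) atTop (𝓝 (Hstar k j))) :
    muStep β ε X Hstar Wstar = Wstar ∧ muStep β ε Xᵀ Wstarᵀ Hstarᵀ = Hstarᵀ := by
  have hβ : β ≠ 0 := (zero_lt_one.trans_le hβ1).ne'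
  have hW : ∀ i k, ε ≤ Wstar i k := fun i k => ge_of_tendsto' (hWs i k) fun s => h.le_W _ i k
  have hH : ∀ k j, ε ≤ Hstar k j := fun k j => ge_of_tendsto' (hHs k j) fun s => h.le_H _ k j
  have hW0 : ∀ i k, 0 < Wstar i k := fun i k => hε.trans_le (hW i k)
  have hH0 : ∀ k j, 0 < Hstar k j := fun k j => hε.trans_le (hH k j)
  have hWhat : ∀ i k, Tendsto (fun s => What (φ s) i k) atTop (𝓝 (Wstar i k)) := fun i k => by
    simpa using (hWs i k).sub ((tendsto_zero_of_summable_sq (h.summable_W i k)).comp hφ)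
  have hHhat : ∀ k j, Tendsto (fun s => Hhat (φ s) k j) atTop (𝓝 (Hstar k j)) := fun k j => by
    simpa using (hHs k j).sub ((tendsto_zero_of_summable_sq (h.summable_H k j)).comp hφ)
  obtain ⟨hdecW, hdecH⟩ := h.tendsto_muDecrease_zero hβ1 hβ2 hε hX
  have hfixW : muStep β ε X Hstar Wstar = Wstar :=
    muStep_eq_of_tendsto_muDecrease hβ hε hH0 hW hHs hWhat hWs fun i k => (hdecW i k).comp hφ
  have hWsucc : ∀ i k, Tendsto (fun s => W (φ s + 1) i k) atTop (𝓝 (Wstar i k)) := fun i k => by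
    simpa only [h.W_succ, hfixW] using
      tendsto_muStep (β := β) (ε := ε) (X := X) hH0 hW0 hHs hWhat i k
  exact ⟨hfixW, muStep_eq_of_tendsto_muDecrease hβ hε (fun k i => hW0 i k) (fun j k => hH k j)
    (fun k i => hWsucc i k) (fun j k => hHhat k j) (fun j k => hHs k j)
    fun j k => (hdecH j k).comp hφ⟩

lemma isStationaryLeft_of_tendsto (h : IsInexactMU β ε X W What H Hhat) (hβ1 : 1 ≤ β)
    (hβ2 : β ≤ 2) (hε : 0 < ε) (hX : ∀ i j, 0 ≤ X i j) (hφ : Tendsto φ atTop atTop)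
    (hWs : ∀ i k, Tendsto (fun s => W (φ s) i k) atTop (𝓝 (Wstar i k)))
    (hHs : ∀ k j, Tendsto (fun s => H (φ s) k j) atTop (𝓝 (Hstar k j))) :
    IsStationaryLeft β ε X Hstar Wstar ∧ IsStationaryLeft β ε Xᵀ Wstarᵀ Hstarᵀ := by
  have hW : ∀ i k, ε ≤ Wstar i k := fun i k => ge_of_tendsto' (hWs i k) fun s => h.le_W _ i k
  have hH : ∀ k j, ε ≤ Hstar k j := fun k j => ge_of_tendsto' (hHs k j) fun s => h.le_H _ k j
  rcases isEmpty_or_nonempty I with _ | _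
  · exact ⟨isEmptyElim, fun j k => by simp [nmfGrad]⟩
  rcases isEmpty_or_nonempty J with _ | _
  · exact ⟨fun i k => by simp [nmfGrad], isEmptyElim⟩
  rcases isEmpty_or_nonempty K with _ | _
  · exact ⟨fun _ => isEmptyElim, fun _ => isEmptyElim⟩
  obtain ⟨hfixW, hfixH⟩ := h.muStep_eq_of_tendsto hβ1 hβ2 hε hX hφ hWs hHs
  exact ⟨isStationaryLeft_of_muStep_eq hε (fun k j => hε.trans_le (hH k j)) hW hfixW,
    isStationaryLeft_of_muStep_eq hε (fun k i => hε.trans_le (hW i k)) (fun j k => hH k j) hfixH⟩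

end IsInexactMU

end InexactUpdates

end BetaNMF

open BetaNMF Filter in
theorem mue_betaNMF_limit_points_are_kkt_general
    {I J K : Type*} [Fintype I] [Fintype J] [Fintype K] (β ε : ℝ) (hβ1 : 1 ≤ β) (hβ2 : β ≤ 2)
    (hε : 0 < ε) (X : Matrix I J ℝ) (hX : ∀ i j, 0 ≤ X i j)
    (W : ℕ → Matrix I K ℝ) (H : ℕ → Matrix K J ℝ)
    (hWε : ∀ t i k, ε ≤ W t i k) (hHε : ∀ t k j, ε ≤ H t k j)
    (αW αH : ℕ → ℝ) (hαnonneg : ∀ t, 0 ≤ αW t ∧ 0 ≤ αH t)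
    (What : ℕ → Matrix I K ℝ) (Hhat : ℕ → Matrix K J ℝ)
    (hWhat : ∀ t i k, What t i k = W (t + 1) i k + αW t * max (W (t + 1) i k - W t i k) 0)
    (hHhat : ∀ t k j, Hhat t k j = H (t + 1) k j + αH t * max (H (t + 1) k j - H t k j) 0)
    (hWupd : ∀ t i k, W (t + 2) i k =
      max ε (What t i k *
        (∑ j, H (t + 1) k j * X i j / ((What t * H (t + 1)) i j) ^ (2 - β)) /
        (∑ j, H (t + 1) k j * ((What t * H (t + 1)) i j) ^ (β - 1))))
    (hHupd : ∀ t k j, H (t + 2) k j =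
      max ε (Hhat t k j *
        (∑ i, W (t + 2) i k * X i j / ((W (t + 2) * Hhat t) i j) ^ (2 - β)) /
        (∑ i, W (t + 2) i k * ((W (t + 2) * Hhat t) i j) ^ (β - 1))))
    (hsumH : Summable (fun t : ℕ =>
      (αH (t + 1)) ^ 2 * ∑ k, ∑ j, (max (H (t + 2) k j - H (t + 1) k j) 0) ^ 2))
    (hsumW : Summable (fun t : ℕ =>
      (αW (t + 1)) ^ 2 * ∑ i, ∑ k, (max (W (t + 2) i k - W (t + 1) i k) 0) ^ 2)) :
    (∃ Cb : ℝ, ∀ t, (∀ i k, |W t i k| ≤ Cb) ∧ (∀ k j, |H t k j| ≤ Cb)) ∧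
    ∀ (Wstar : Matrix I K ℝ) (Hstar : Matrix K J ℝ),
      (∃ φ : ℕ → ℕ, StrictMono φ ∧
        (∀ i k, Filter.Tendsto (fun s => W (φ s) i k) Filter.atTop
          (nhds (Wstar i k))) ∧
        (∀ k j, Filter.Tendsto (fun s => H (φ s) k j) Filter.atTop
          (nhds (Hstar k j)))) →
      (∀ i k, ε ≤ Wstar i k) ∧ (∀ k j, ε ≤ Hstar k j) ∧
      (∀ i k,
        0 ≤ ∑ j, Hstar k j * (((Wstar * Hstar) i j) ^ (β - 1) -
              X i j * ((Wstar * Hstar) i j) ^ (β - 2)) ∧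
        (∑ j, Hstar k j * (((Wstar * Hstar) i j) ^ (β - 1) -
              X i j * ((Wstar * Hstar) i j) ^ (β - 2))) * (Wstar i k - ε) = 0) ∧
      (∀ k j,
        0 ≤ ∑ i, Wstar i k * (((Wstar * Hstar) i j) ^ (β - 1) -
              X i j * ((Wstar * Hstar) i j) ^ (β - 2)) ∧
        (∑ i, Wstar i k * (((Wstar * Hstar) i j) ^ (β - 1) -
              X i j * ((Wstar * Hstar) i j) ^ (β - 2))) * (Hstar k j - ε) = 0) := by
  have hMU : IsInexactMU β ε X (fun t => W (t + 1)) What (fun t => H (t + 1)) Hhat :=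
    { le_W := fun t => hWε (t + 1)
      le_H := fun t => hHε (t + 1)
      le_What := le_of_extrapolation (fun t => (hαnonneg t).1) hWε hWhat
      le_Hhat := le_of_extrapolation (fun t => (hαnonneg t).2) hHε hHhat
      W_succ := fun t => Matrix.ext (hWupd t)
      H_succ := fun t => Matrix.ext fun j k => by
        simpa [muStep, muNum, muDen, ← Matrix.transpose_mul] using hHupd t k j
      summable_W := summable_sq_sub_of_extrapolation hWhat hsumW
      summable_H := summable_sq_sub_of_extrapolation hHhat hsumH }
  obtain ⟨B, hB⟩ := hMU.exists_bound hε hX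
  obtain ⟨BW, hBW⟩ := exists_forall_le_of_succ_le fun t i k => ((hB t).1 i k).1
  obtain ⟨BH, hBH⟩ := exists_forall_le_of_succ_le fun t k j => ((hB t).2 k j).1
  refine ⟨⟨max BW BH, fun t =>
    ⟨fun i k => (abs_of_nonneg (hε.le.trans (hWε t i k))).trans_le (le_max_of_le_left (hBW t i k)),
      fun k j => (abs_of_nonneg (hε.le.trans (hHε t k j))).trans_le
        (le_max_of_le_right (hBH t k j))⟩⟩, ?_⟩
  rintro Wstar Hstar ⟨φ, hφ, hWs, hHs⟩
  obtain ⟨ψ, hψ, hψφ⟩ := exists_tendsto_atTop_succ_eq hφ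
  have hshift : Tendsto (· + 1) (atTop : Filter ℕ) atTop := tendsto_add_atTop_nat 1
  obtain ⟨hstatW, hstatH⟩ := hMU.isStationaryLeft_of_tendsto hβ1 hβ2 hε hX hψ
    (fun i k => by simpa [hψφ, Function.comp_def] using (hWs i k).comp hshift)
    (fun k j => by simpa [hψφ, Function.comp_def] using (hHs k j).comp hshift)
  refine ⟨fun i k => ge_of_tendsto' (hWs i k) fun s => hWε _ i k,
    fun k j => ge_of_tendsto' (hHs k j) fun s => hHε _ k j, hstatW, fun k j => ?_⟩
  simpa only [nmfGrad, betaDivDeriv, ← Matrix.transpose_mul, Matrix.transpose_apply] using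
    hstatH j k

open Finset in
/-- Theorem 4.1 of the paper: the multiplicative updates with extrapolation (MUe)
for β-NMF, β ∈ [1,2], generate a bounded sequence, and every limit point is a KKT
point of minimizing `D_β(X, WH)` over `{W ≥ ε, H ≥ ε}`. Here the index `t : ℕ` of
the sequences `W, H` corresponds to the iterate `t - 1` of the paper (so `W 0` is
the initial point `W⁻¹` and `W (t+1)` is the iterate `Wᵗ`). -/
theorem mue_betaNMF_limit_points_are_kkt
    {m n r : ℕ} (β ε : ℝ) (hβ1 : 1 ≤ β) (hβ2 : β ≤ 2) (hε : 0 < ε)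
    (X : Matrix (Fin m) (Fin n) ℝ) (hX : ∀ i j, 0 < X i j)
    (W : ℕ → Matrix (Fin m) (Fin r) ℝ) (H : ℕ → Matrix (Fin r) (Fin n) ℝ)
    (hWε : ∀ t i k, ε ≤ W t i k) (hHε : ∀ t k j, ε ≤ H t k j)
    (αW αH : ℕ → ℝ)
    (hαnonneg : ∀ t, 0 ≤ αW t ∧ 0 ≤ αH t)
    (hαbdd : ∃ Cα : ℝ, ∀ t, αW t ≤ Cα ∧ αH t ≤ Cα)
    (What : ℕ → Matrix (Fin m) (Fin r) ℝ) (Hhat : ℕ → Matrix (Fin r) (Fin n) ℝ)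
    (hWhat : ∀ t i k,
      What t i k = W (t+1) i k + αW t * max (W (t+1) i k - W t i k) 0)
    (hHhat : ∀ t k j,
      Hhat t k j = H (t+1) k j + αH t * max (H (t+1) k j - H t k j) 0)
    (hWupd : ∀ t i k, W (t+2) i k =
      max ε (What t i k *
        (∑ j, H (t+1) k j * X i j / ((What t * H (t+1)) i j) ^ (2 - β)) /
        (∑ j, H (t+1) k j * ((What t * H (t+1)) i j) ^ (β - 1))))
    (hHupd : ∀ t k j, H (t+2) k j =
      max ε (Hhat t k j *
        (∑ i, W (t+2) i k * X i j / ((W (t+2) * Hhat t) i j) ^ (2 - β)) /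
        (∑ i, W (t+2) i k * ((W (t+2) * Hhat t) i j) ^ (β - 1))))
    (hsumH : Summable (fun t : ℕ =>
      (αH (t+1)) ^ 2 * ∑ k, ∑ j, (max (H (t+2) k j - H (t+1) k j) 0) ^ 2))
    (hsumW : Summable (fun t : ℕ =>
      (αW (t+1)) ^ 2 * ∑ i, ∑ k, (max (W (t+2) i k - W (t+1) i k) 0) ^ 2)) :
    (∃ Cb : ℝ, ∀ t, (∀ i k, |W t i k| ≤ Cb) ∧ (∀ k j, |H t k j| ≤ Cb)) ∧
    ∀ (Wstar : Matrix (Fin m) (Fin r) ℝ) (Hstar : Matrix (Fin r) (Fin n) ℝ),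
      (∃ φ : ℕ → ℕ, StrictMono φ ∧
        (∀ i k, Filter.Tendsto (fun s => W (φ s) i k) Filter.atTop
          (nhds (Wstar i k))) ∧
        (∀ k j, Filter.Tendsto (fun s => H (φ s) k j) Filter.atTop
          (nhds (Hstar k j)))) →
      (∀ i k, ε ≤ Wstar i k) ∧ (∀ k j, ε ≤ Hstar k j) ∧
      (∀ i k,
        0 ≤ ∑ j, Hstar k j * (((Wstar * Hstar) i j) ^ (β - 1) -
              X i j * ((Wstar * Hstar) i j) ^ (β - 2)) ∧
        (∑ j, Hstar k j * (((Wstar * Hstar) i j) ^ (β - 1) -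
              X i j * ((Wstar * Hstar) i j) ^ (β - 2))) * (Wstar i k - ε) = 0) ∧
      (∀ k j,
        0 ≤ ∑ i, Wstar i k * (((Wstar * Hstar) i j) ^ (β - 1) -
              X i j * ((Wstar * Hstar) i j) ^ (β - 2)) ∧
        (∑ i, Wstar i k * (((Wstar * Hstar) i j) ^ (β - 1) -
              X i j * ((Wstar * Hstar) i j) ^ (β - 2))) * (Hstar k j - ε) = 0) :=
  mue_betaNMF_limit_points_are_kkt_general β ε hβ1 hβ2 hε X (fun i j => (hX i j).le) W H hWε hHε
    αW αH hαnonneg What Hhat hWhat hHhat hWupd hHupd hsumH hsumW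
end
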